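/- arXiv:2604.04227 — 4 statements merged into one kernel-verified Lean document; each statement's English description precedes it below -/
import Mathlib

section
/- Let X and Y be Polish spaces, let μ and ν be Borel probability measures on X and Y, and let c : X × Y → ℝ be a real-valued lower semicontinuous cost satisfying the standing assumption. Let π ∈ M(μ,ν) be a coupling with ∫ c dπ < ∞. Then π is an optimal transport plan (i.e., ∫ c dπ = inf_{π' ∈ M(μ,ν)} ∫ c dπ') if and only if π is concentrated on a c-cyclically monotone subset of X × Y. -/
open MeasureTheory Set

/-- A coupling of `(μ, ν)`: a measure on the product whose marginals are `μ` and `ν`. -/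
def IsCoupling {X Y : Type*} [MeasurableSpace X] [MeasurableSpace Y]
    (π : Measure (X × Y)) (μ : Measure X) (ν : Measure Y) : Prop :=
  π.map Prod.fst = μ ∧ π.map Prod.snd = ν

/-- `Γ ⊆ X × Y` is `c`-cyclically monotone: for any finite cycle of points of `Γ`,
shifting the `y`-components cyclically cannot decrease the total cost. -/
def CyclicallyMonotone {X Y : Type*} (c : X × Y → ℝ) (Γ : Set (X × Y)) : Prop :=
  ∀ (K : ℕ) (x : Fin (K + 1) → X) (y : Fin (K + 1) → Y),
    (∀ k, (x k, y k) ∈ Γ) →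
    ∑ k, c (x k, y k) ≤ ∑ k, c (x k, y (k + 1))

open Filter Topology

lemma exists_compact_inner {Z : Type*} [TopologicalSpace Z] [PolishSpace Z] [MeasurableSpace Z]
    [BorelSpace Z] (π : Measure Z) [IsFiniteMeasure π]
    (Γ : Set Z) (hΓ : MeasurableSet Γ) (ε : ENNReal) (hε : ε ≠ 0) :
    ∃ K ⊆ Γ, IsCompact K ∧ π (Γ \ K) < ε := by
  obtain ⟨K, h1, h2, h3⟩ := hΓ.exists_isCompact_sdiff_lt (μ := π) (measure_ne_top _ _) hε
  exact ⟨K, h1, h2, h3⟩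

lemma continuousOn_of_finer {Z : Type*} (t t' : TopologicalSpace Z) (h2 : @T2Space Z t)
    (hle : t' ≤ t) (c : Z → ℝ) (hcont : @Continuous Z ℝ t' _ c) (K : Set Z)
    (hKc : @IsCompact Z t' K) : @IsCompact Z t K ∧ @ContinuousOn Z ℝ t _ c K := by
  have key : ∀ A : Set Z, @IsCompact Z t' A → @IsCompact Z t A := by
    intro A hA
    have := @IsCompact.image Z Z t' t A id hA (continuous_id_iff_le.2 hle)
    simpa using this
  refine ⟨key K hKc, ?_⟩
  rw [@continuousOn_iff_isClosed Z ℝ t _]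
  intro F hF
  refine ⟨c ⁻¹' F ∩ K, ?_, by simp [inter_assoc]⟩
  apply @IsCompact.isClosed Z t h2
  apply key
  have h2 : @IsClosed Z t' (c ⁻¹' F) := @IsClosed.preimage Z ℝ t' _ c hcont F hF
  exact @IsCompact.inter_left Z t' _ _ hKc h2

/-- Lusin-type statement -/
lemma exists_compact_lusin {Z : Type*} [t : TopologicalSpace Z] [hp : PolishSpace Z]
    [m : MeasurableSpace Z]
    [hb0 : BorelSpace Z] (π : Measure Z) [IsFiniteMeasure π] (c : Z → ℝ) (hc : Measurable c)
    (Γ : Set Z) (hΓ : MeasurableSet Γ) (ε : ENNReal) (hε : ε ≠ 0) :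
    ∃ K ⊆ Γ, IsCompact K ∧ ContinuousOn c K ∧ π (Γ \ K) < ε := by
  have hT : T2Space Z := inferInstance
  obtain ⟨t', hle, hcont, hpol⟩ := hc.exists_continuous
  have hb : @BorelSpace Z t' m :=
    @BorelSpace.mk Z t' m
      ((@BorelSpace.measurable_eq Z t m hb0).trans (borel_eq_borel_of_le hpol hp hle).symm)
  obtain ⟨K, hK, hKc, hlt⟩ := @exists_compact_inner Z t' hpol m hb π _ Γ hΓ ε hε
  obtain ⟨h1, h2⟩ := continuousOn_of_finer t t' hT hle c hcont K hKc
  exact ⟨K, hK, h1, h2, hlt⟩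

lemma exists_sigmaCompact {Z : Type*} [t : TopologicalSpace Z] [PolishSpace Z] [MeasurableSpace Z]
    [BorelSpace Z] (π : Measure Z) [IsFiniteMeasure π] (c : Z → ℝ) (hc : Measurable c)
    (Γ : Set Z) (hΓ : MeasurableSet Γ) (h0 : π Γᶜ = 0) :
    ∃ K : ℕ → Set Z, (∀ n, K n ⊆ Γ) ∧ (∀ n, IsCompact (K n)) ∧
      (∀ n, ContinuousOn c (K n)) ∧ π (⋃ n, K n)ᶜ = 0 := by
  have H : ∀ n : ℕ, ∃ K ⊆ Γ, IsCompact K ∧ ContinuousOn c K ∧ π (Γ \ K) < (n + 1 : ENNReal)⁻¹ :=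
    fun n => exists_compact_lusin π c hc Γ hΓ _ (by simp)
  choose K hK1 hK2 hK3 hK4 using H
  refine ⟨K, hK1, hK2, hK3, ?_⟩
  have h1 : ∀ n : ℕ, π (⋃ n, K n)ᶜ ≤ ((n : ENNReal))⁻¹ := by
    intro n
    calc π (⋃ n, K n)ᶜ ≤ π (Γᶜ ∪ (Γ \ K n)) := by
          apply measure_mono
          intro z hz
          by_cases hzΓ : z ∈ Γ
          · exact Or.inr ⟨hzΓ, fun h => hz (mem_iUnion.2 ⟨n, h⟩)⟩
          · exact Or.inl hzΓ
      _ ≤ π Γᶜ + π (Γ \ K n) := measure_union_le _ _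
      _ ≤ (n + 1 : ENNReal)⁻¹ := by rw [h0, zero_add]; exact (hK4 n).le
      _ ≤ _ := by gcongr; simp
  have h2 := ge_of_tendsto' ENNReal.tendsto_inv_nat_nhds_zero h1
  simpa using h2

/-- part of the chain cost not depending on the starting point -/
noncomputable def chainW {X Y : Type*} (c : X × Y → ℝ) {N : ℕ} (z : Fin (N + 1) → X × Y) : ℝ :=
  ∑ k : Fin N, c ((z k.castSucc).1, (z k.succ).2) + ∑ k, -c (z k)

def IsChain' {X Y : Type*} (Γ : Set (X × Y)) (zs : X × Y) {N : ℕ} (z : Fin (N + 1) → X × Y) :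
    Prop := (∀ k, z k ∈ Γ) ∧ z (Fin.last N) = zs

noncomputable def potPhi {X Y : Type*} (c : X × Y → ℝ) (Γ : Set (X × Y)) (zs : X × Y) (x : X) :
    EReal :=
  ⨅ (N : ℕ) (z : Fin (N + 1) → X × Y) (_ : IsChain' Γ zs z), ((chainW c z + c (x, (z 0).2) : ℝ) : EReal)

noncomputable def potEta {X Y : Type*} (c : X × Y → ℝ) (Γ : Set (X × Y)) (zs : X × Y) (y : Y) :
    EReal :=
  ⨅ (N : ℕ) (z : Fin (N + 1) → X × Y) (_ : IsChain' Γ zs z ∧ (z 0).2 = y), ((chainW c z : ℝ) : EReal)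

lemma chain_closed_nonneg {X Y : Type*} {c : X × Y → ℝ} {Γ : Set (X × Y)}
    (hΓ : CyclicallyMonotone c Γ) {zs : X × Y} {N : ℕ} {z : Fin (N + 1) → X × Y}
    (hz : IsChain' Γ zs z) : 0 ≤ chainW c z + c (zs.1, (z 0).2) := by
  have h := hΓ N (fun k => (z k).1) (fun k => (z k).2) (fun k => hz.1 k)
  rw [Fin.sum_univ_castSucc (f := fun k => c ((z k).1, (z (k + 1)).2))] at h
  simp only [Fin.coeSucc_eq_succ, Fin.last_add_one, hz.2] at h
  unfold chainW
  rw [Finset.sum_neg_distrib]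
  simp only [Prod.mk.eta] at h
  linarith

lemma chain_cons {X Y : Type*} {c : X × Y → ℝ} {Γ : Set (X × Y)} {zs : X × Y} {N : ℕ}
    {z : Fin (N + 1) → X × Y} (hz : IsChain' Γ zs z) {w : X × Y} (hw : w ∈ Γ) :
    IsChain' Γ zs (Fin.cons w z : Fin (N + 1 + 1) → X × Y) ∧
    chainW c (Fin.cons w z : Fin (N + 1 + 1) → X × Y) = chainW c z + c (w.1, (z 0).2) - c w := by
  refine ⟨⟨?_, ?_⟩, ?_⟩
  · intro k
    refine Fin.cases ?_ (fun i => ?_) k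
    · simpa using hw
    · simpa using hz.1 i
  · rw [← Fin.succ_last, Fin.cons_succ]; exact hz.2
  · unfold chainW
    rw [Fin.sum_univ_succ (n := N), Fin.sum_univ_succ (n := N + 1)]
    simp only [Fin.castSucc_zero, Fin.cons_zero, Fin.cons_succ, ← Fin.succ_castSucc]
    ring

lemma potPhi_le {X Y : Type*} (c : X × Y → ℝ) (Γ : Set (X × Y)) (zs : X × Y) (x : X) (y : Y) :
    potPhi c Γ zs x ≤ (c (x, y) : EReal) + potEta c Γ zs y := by
  rw [add_comm, ← EReal.sub_le_iff_le_add (by simp) (by simp)]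
  refine le_iInf fun N => le_iInf fun z => le_iInf fun hz => ?_
  rw [EReal.sub_le_iff_le_add (by simp) (by simp), ← EReal.coe_add]
  refine (iInf_le_of_le N <| iInf_le_of_le z <| iInf_le_of_le hz.1 ?_)
  rw [hz.2]

lemma pot_finite {X Y : Type*} {c : X × Y → ℝ} {Γ : Set (X × Y)} (hΓ : CyclicallyMonotone c Γ)
    {zs : X × Y} (hzs : zs ∈ Γ) {w : X × Y} (hw : w ∈ Γ) :
    ∃ p q : ℝ, potPhi c Γ zs w.1 = p ∧ potEta c Γ zs w.2 = q ∧ p - q = c w := by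
  have h1 : ((c w - c (zs.1, w.2) : ℝ) : EReal) ≤ potPhi c Γ zs w.1 := by
    refine le_iInf fun N => le_iInf fun z => le_iInf fun hz => ?_
    have := chain_closed_nonneg hΓ (chain_cons (c := c) hz hw).1
    rw [(chain_cons hz hw).2] at this
    simp only [Fin.cons_zero] at this
    exact_mod_cast (by linarith)
  have h2 : potPhi c Γ zs w.1 < ⊤ := by
    refine lt_of_le_of_lt (iInf_le_of_le 0 <| iInf_le_of_le (fun _ => zs) <|
      iInf_le_of_le ⟨fun _ => hzs, rfl⟩ le_rfl) (EReal.coe_lt_top _)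
  have h3 : potEta c Γ zs w.2 + (c w : EReal) ≤ potPhi c Γ zs w.1 := by
    refine le_iInf fun N => le_iInf fun z => le_iInf fun hz => ?_
    have h4 : potEta c Γ zs w.2 ≤ ((chainW c z + c (w.1, (z 0).2) - c w : ℝ) : EReal) := by
      rw [← (chain_cons hz hw).2]
      exact iInf_le_of_le (N + 1) <| iInf_le_of_le _ <|
        iInf_le_of_le ⟨(chain_cons (c := c) hz hw).1, by simp⟩ le_rfl
    refine (add_le_add_left h4 _).trans ?_
    rw [← EReal.coe_add]
    exact_mod_cast (by linarith)
  have h5 := potPhi_le c Γ zs w.1 w.2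
  simp only [Prod.mk.eta] at h5
  generalize potPhi c Γ zs w.1 = P at *
  generalize potEta c Γ zs w.2 = Q at *
  induction P with
  | bot => exact absurd (le_bot_iff.1 h1) (EReal.coe_ne_bot _)
  | top => simp at h2
  | coe p =>
    induction Q with
    | bot => simp at h5
    | top => simp at h3
    | coe q =>
      refine ⟨p, q, rfl, rfl, ?_⟩
      norm_cast at h3 h5
      linarith

/-- clamp -/
noncomputable def clampE (n : ℕ) (e : EReal) : ℝ := (max (-(n : ℝ) : ℝ) (min (n : ℝ) e) : EReal).toReal

lemma clampE_coe (n : ℕ) (r : ℝ) : clampE n r = max (-(n : ℝ)) (min (n : ℝ) r) := by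
  unfold clampE
  have : (max ((-(n : ℝ) : ℝ) : EReal) (min ((n : ℝ) : EReal) (r : EReal))) =
    ((max (-(n : ℝ)) (min (n : ℝ) r) : ℝ) : EReal) := by
      rw [EReal.coe_strictMono.monotone.map_max, EReal.coe_strictMono.monotone.map_min]
  rw [this, EReal.toReal_coe]

lemma clampE_bot (n : ℕ) : clampE n ⊥ = -n := by
  unfold clampE; rw [min_eq_right bot_le, max_eq_left bot_le, EReal.toReal_coe]

lemma clampE_top (n : ℕ) : clampE n ⊤ = n := by
  unfold clampE
  rw [min_eq_left le_top, max_eq_right, EReal.toReal_coe]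
  have : (0:ℝ) ≤ n := Nat.cast_nonneg n
  exact_mod_cast (by linarith)

lemma clampE_abs (n : ℕ) (e : EReal) : |clampE n e| ≤ n := by
  have : (0:ℝ) ≤ n := Nat.cast_nonneg n
  induction e with
  | bot => simp [clampE_bot]
  | top => simp [clampE_top]
  | coe r => rw [clampE_coe, abs_le]; constructor <;> simp

lemma clampE_sub_le (n : ℕ) {p e : EReal} {c : ℝ} (hc : 0 ≤ c) (h : p ≤ c + e) :
    clampE n p - clampE n e ≤ c := by
  have hp := abs_le.1 (clampE_abs n p)
  have he := abs_le.1 (clampE_abs n e)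
  induction e with
  | bot => 
    simp at h; subst h; simpa using hc
  | top => rw [clampE_top]; linarith
  | coe e =>
    induction p with
    | bot => rw [clampE_bot]; linarith
    | top => 
      rw [← EReal.coe_add] at h; exact absurd (top_le_iff.1 h) (EReal.coe_ne_top _)
    | coe p => 
      norm_cast at h
      rw [clampE_coe, clampE_coe]
      grind

lemma clampE_tendsto (r : ℝ) : Tendsto (fun n : ℕ => clampE n r) atTop (𝓝 r) := by
  obtain ⟨m, hm⟩ := exists_nat_ge |r|
  refine tendsto_const_nhds.congr' ?_
  filter_upwards [eventually_ge_atTop m] with n hn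
  have : (m : ℝ) ≤ n := by exact_mod_cast hn
  have := abs_le.1 hm
  rw [clampE_coe, min_eq_right (by linarith), max_eq_right (by linarith)]

lemma clampE_measurable (n : ℕ) : Measurable (clampE n) := by
  unfold clampE
  fun_prop

lemma measurableSet_exists_lt {Z L : Type*} [TopologicalSpace Z] [MeasurableSpace Z] [BorelSpace Z]
    [TopologicalSpace L] [CompactSpace L] (S : Set (Z × L)) (hS : IsClosed S) (f : Z × L → EReal)
    (hf : LowerSemicontinuous f) (t : EReal) :
    MeasurableSet {z | ∃ l, (z, l) ∈ S ∧ f (z, l) < t} := by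
  have : {z | ∃ l, (z, l) ∈ S ∧ f (z, l) < t} =
      ⋃ q : ℚ, ⋃ (_ : ((q : ℝ) : EReal) < t), Prod.fst '' (S ∩ f ⁻¹' Iic ((q : ℝ) : EReal)) := by
    ext z
    simp only [mem_ofPred_eq, mem_iUnion, mem_image, mem_inter_iff, mem_preimage, mem_Iic]
    constructor
    · rintro ⟨l, h1, h2⟩
      obtain ⟨q, h3, h4⟩ := EReal.lt_iff_exists_rat_btwn.1 h2
      exact ⟨q, h4, (z, l), ⟨h1, h3.le⟩, rfl⟩
    · rintro ⟨q, h4, ⟨z', l⟩, ⟨h1, h3⟩, rfl⟩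
      exact ⟨l, h1, h3.trans_lt h4⟩
  rw [this]
  refine MeasurableSet.iUnion fun q => MeasurableSet.iUnion fun _ => IsClosed.measurableSet ?_
  exact isClosedMap_fst_of_compactSpace _ (hS.inter (hf.isClosed_preimage _))

lemma lsc_chainW {X Y : Type*} [TopologicalSpace X] [TopologicalSpace Y] {c : X × Y → ℝ}
    (hc : LowerSemicontinuous c) {N : ℕ} (K : Fin (N + 1) → Set (X × Y))
    (hK : ∀ n, ContinuousOn c (K n)) :
    LowerSemicontinuous (fun l : (k : Fin (N + 1)) → K k => chainW c (fun k => (l k).1)) := by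
  unfold chainW
  refine LowerSemicontinuous.add ?_ (Continuous.lowerSemicontinuous ?_)
  · refine lowerSemicontinuous_sum fun k _ => ?_
    refine hc.comp (g := fun l : (k : Fin (N + 1)) → K k =>
      ((l k.castSucc).1.1, (l k.succ).1.2)) ?_
    fun_prop
  · refine continuous_finsetSum _ fun k _ => Continuous.neg ?_
    exact (continuousOn_iff_continuous_domRestrict.1 (hK k)).comp (continuous_apply k)

lemma measurable_potPhi {X Y : Type*} [TopologicalSpace X] [TopologicalSpace Y]
    [MeasurableSpace X] [BorelSpace X] [T2Space X] [T2Space Y]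
    {c : X × Y → ℝ}
    (hc : LowerSemicontinuous c) (K : ℕ → Set (X × Y)) (hKc : ∀ n, IsCompact (K n))
    (hK : ∀ n, ContinuousOn c (K n)) (zs : X × Y) :
    Measurable (potPhi c (⋃ n, K n) zs) := by
  refine measurable_of_Iio fun t => ?_
  have : potPhi c (⋃ n, K n) zs ⁻¹' Iio t = ⋃ (N : ℕ) (n : Fin (N + 1) → ℕ),
      {x | ∃ l : (k : Fin (N + 1)) → K (n k),
        (x, l) ∈ {p : X × ((k : Fin (N + 1)) → K (n k)) | (p.2 (Fin.last N)).1 = zs} ∧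
        (fun p : X × ((k : Fin (N + 1)) → K (n k)) =>
          ((chainW c (fun k => (p.2 k).1) + c (p.1, (p.2 0).1.2) : ℝ) : EReal)) (x, l) < t} := by
    ext x
    simp only [mem_preimage, mem_Iio, potPhi, iInf_lt_iff, mem_iUnion, mem_ofPred_eq]
    constructor
    · rintro ⟨N, z, hz, hlt⟩
      choose n hn using fun k => mem_iUnion.1 (hz.1 k)
      exact ⟨N, n, fun k => ⟨z k, hn k⟩, hz.2, hlt⟩
    · rintro ⟨N, n, l, h1, h2⟩
      exact ⟨N, fun k => (l k).1, ⟨fun k => mem_iUnion.2 ⟨n k, (l k).2⟩, h1⟩, h2⟩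
  rw [this]
  refine MeasurableSet.iUnion fun N => MeasurableSet.iUnion fun n => ?_
  have : ∀ k, CompactSpace (K (n k)) := fun k => isCompact_iff_compactSpace.1 (hKc _)
  refine measurableSet_exists_lt (Z := X) (L := (k : Fin (N + 1)) → K (n k))
    {p : X × ((k : Fin (N + 1)) → K (n k)) | (p.2 (Fin.last N)).1 = zs} ?_ (fun p : X × ((k : Fin (N + 1)) → K (n k)) =>
          ((chainW c (fun k => (p.2 k).1) + c (p.1, (p.2 0).1.2) : ℝ) : EReal)) ?_ t
  · exact isClosed_eq (by fun_prop) continuous_const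
  · refine continuous_coe_real_ereal.comp_lowerSemicontinuous ?_ EReal.coe_strictMono.monotone
    refine LowerSemicontinuous.add ?_ ?_
    · exact (lsc_chainW hc (fun k => K (n k)) (fun k => hK _)).comp continuous_snd
    · refine hc.comp (g := fun p : X × ((k : Fin (N + 1)) → K (n k)) => (p.1, (p.2 0).1.2)) ?_
      fun_prop

lemma measurable_potEta {X Y : Type*} [TopologicalSpace X] [TopologicalSpace Y]
    [MeasurableSpace Y] [BorelSpace Y] [T2Space X] [T2Space Y]
    {c : X × Y → ℝ}
    (hc : LowerSemicontinuous c) (K : ℕ → Set (X × Y)) (hKc : ∀ n, IsCompact (K n))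
    (hK : ∀ n, ContinuousOn c (K n)) (zs : X × Y) :
    Measurable (potEta c (⋃ n, K n) zs) := by
  refine measurable_of_Iio fun t => ?_
  have : potEta c (⋃ n, K n) zs ⁻¹' Iio t = ⋃ (N : ℕ) (n : Fin (N + 1) → ℕ),
      {x | ∃ l : (k : Fin (N + 1)) → K (n k),
        (x, l) ∈ {p : Y × ((k : Fin (N + 1)) → K (n k)) | (p.2 (Fin.last N)).1 = zs ∧
          (p.2 0).1.2 = p.1} ∧
        (fun p : Y × ((k : Fin (N + 1)) → K (n k)) =>
          ((chainW c (fun k => (p.2 k).1) : ℝ) : EReal)) (x, l) < t} := by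
    ext x
    simp only [mem_preimage, mem_Iio, potEta, iInf_lt_iff, mem_iUnion, mem_ofPred_eq]
    constructor
    · rintro ⟨N, z, hz, hlt⟩
      choose n hn using fun k => mem_iUnion.1 (hz.1.1 k)
      exact ⟨N, n, fun k => ⟨z k, hn k⟩, ⟨hz.1.2, hz.2⟩, hlt⟩
    · rintro ⟨N, n, l, h1, h2⟩
      exact ⟨N, fun k => (l k).1, ⟨⟨fun k => mem_iUnion.2 ⟨n k, (l k).2⟩, h1.1⟩, h1.2⟩, h2⟩
  rw [this]
  refine MeasurableSet.iUnion fun N => MeasurableSet.iUnion fun n => ?_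
  have : ∀ k, CompactSpace (K (n k)) := fun k => isCompact_iff_compactSpace.1 (hKc _)
  refine measurableSet_exists_lt (Z := Y) (L := (k : Fin (N + 1)) → K (n k))
    {p : Y × ((k : Fin (N + 1)) → K (n k)) | (p.2 (Fin.last N)).1 = zs ∧ (p.2 0).1.2 = p.1} ?_ (fun p : Y × ((k : Fin (N + 1)) → K (n k)) =>
          ((chainW c (fun k => (p.2 k).1) : ℝ) : EReal)) ?_ t
  · exact (isClosed_eq (by fun_prop) continuous_const).inter
      (isClosed_eq (by fun_prop) (by fun_prop))
  · refine continuous_coe_real_ereal.comp_lowerSemicontinuous ?_ EReal.coe_strictMono.monotone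
    exact (lsc_chainW hc (fun k => K (n k)) (fun k => hK _)).comp continuous_snd

lemma IsCoupling.isProb {X Y : Type*} [MeasurableSpace X] [MeasurableSpace Y]
    {π : Measure (X × Y)} {μ : Measure X} {ν : Measure Y} [IsProbabilityMeasure μ]
    (h : IsCoupling π μ ν) : IsProbabilityMeasure π := by
  constructor
  have : π.map Prod.fst univ = 1 := by rw [h.1]; simp
  rwa [Measure.map_apply measurable_fst MeasurableSet.univ, preimage_univ] at this

lemma CyclicallyMonotone.mono {X Y : Type*} {c : X × Y → ℝ} {Γ Γ' : Set (X × Y)}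
    (h : CyclicallyMonotone c Γ) (hs : Γ' ⊆ Γ) : CyclicallyMonotone c Γ' :=
  fun K x y hxy => h K x y fun k => hs (hxy k)

lemma coupling_int_fst {X Y : Type*} [MeasurableSpace X] [MeasurableSpace Y]
    {π : Measure (X × Y)} {μ : Measure X} {ν : Measure Y}
    (h : IsCoupling π μ ν) {f : X → ℝ} (hf : Integrable f μ) :
    Integrable (fun z : X × Y => f z.1) π ∧ ∫ z, f z.1 ∂π = ∫ x, f x ∂μ := by
  rw [← h.1] at hf ⊢
  exact ⟨hf.comp_measurable measurable_fst,
    (integral_map measurable_fst.aemeasurable hf.aestronglyMeasurable).symm⟩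

lemma coupling_int_snd {X Y : Type*} [MeasurableSpace X] [MeasurableSpace Y]
    {π : Measure (X × Y)} {μ : Measure X} {ν : Measure Y}
    (h : IsCoupling π μ ν) {f : Y → ℝ} (hf : Integrable f ν) :
    Integrable (fun z : X × Y => f z.2) π ∧ ∫ z, f z.2 ∂π = ∫ x, f x ∂ν := by
  rw [← h.2] at hf ⊢
  exact ⟨hf.comp_measurable measurable_snd,
    (integral_map measurable_snd.aemeasurable hf.aestronglyMeasurable).symm⟩

/-- approximate dual maximizers for a coupling concentrated on a cyclically monotone set -/
lemma exists_dual_of_cm {X Y : Type*}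
    [MeasurableSpace X] [TopologicalSpace X] [PolishSpace X] [BorelSpace X]
    [MeasurableSpace Y] [TopologicalSpace Y] [PolishSpace Y] [BorelSpace Y]
    {μ : Measure X} {ν : Measure Y} [IsProbabilityMeasure μ] [IsProbabilityMeasure ν]
    {c : X × Y → ℝ} (hc : LowerSemicontinuous c) (h0 : ∀ z, 0 ≤ c z)
    {π : Measure (X × Y)} (hπ : IsCoupling π μ ν) (hint : Integrable c π)
    {Γ : Set (X × Y)} (hΓm : MeasurableSet Γ) (hΓ : CyclicallyMonotone c Γ) (hΓ0 : π Γᶜ = 0)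
    {ε : ℝ} (hε : 0 < ε) :
    ∃ (φ : X → ℝ) (ψ : Y → ℝ), Measurable φ ∧ Measurable ψ ∧ Integrable φ μ ∧ Integrable ψ ν ∧
      (∀ x y, φ x + ψ y ≤ c (x, y)) ∧ ∫ z, c z ∂π - ε < ∫ x, φ x ∂μ + ∫ y, ψ y ∂ν := by
  have := hπ.isProb
  obtain ⟨K, hKΓ, hKc, hKcont, hK0⟩ := exists_sigmaCompact π c hc.measurable Γ hΓm hΓ0
  have hCM := hΓ.mono (iUnion_subset hKΓ)
  have hne : (⋃ n, K n).Nonempty := by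
    rw [nonempty_iff_ne_empty]
    intro h
    rw [h] at hK0
    simp at hK0
  obtain ⟨zs, hzs⟩ := hne
  have hm1 := measurable_potPhi hc K hKc hKcont zs
  have hm2 := measurable_potEta hc K hKc hKcont zs
  set P := potPhi c (⋃ n, K n) zs
  set Q := potEta c (⋃ n, K n) zs
  have hφm : ∀ n, Measurable fun x => clampE n (P x) := fun n => (clampE_measurable n).comp hm1
  have hψm : ∀ n, Measurable fun y => -clampE n (Q y) :=
    fun n => ((clampE_measurable n).comp hm2).neg
  have hφi : ∀ n, Integrable (fun x => clampE n (P x)) μ := fun n =>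
    Integrable.of_bound (hφm n).aestronglyMeasurable n
      (Eventually.of_forall fun x => clampE_abs n (P x))
  have hψi : ∀ n, Integrable (fun y => -clampE n (Q y)) ν := fun n =>
    Integrable.of_bound (hψm n).aestronglyMeasurable n
      (Eventually.of_forall fun x => by
        rw [norm_neg]; exact clampE_abs n (Q x))
  have hle : ∀ n x y, clampE n (P x) + -clampE n (Q y) ≤ c (x, y) := by
    intro n x y
    exact clampE_sub_le n (h0 _) (potPhi_le c (⋃ n, K n) zs x y)
  have hae : ∀ᵐ z ∂π, z ∈ ⋃ n, K n := by
    rw [ae_iff]; exact hK0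
  have hlim : Tendsto (fun n : ℕ => ∫ z, (clampE n (P z.1) + -clampE n (Q z.2)) ∂π) atTop
      (𝓝 (∫ z, c z ∂π)) := by
    refine tendsto_integral_of_dominated_convergence c ?_ hint ?_ ?_
    · intro n
      exact (((hφm n).comp measurable_fst).add ((hψm n).comp measurable_snd)).aestronglyMeasurable
    · intro n
      filter_upwards [hae] with z hz
      obtain ⟨p, q, hp, hq, hpq⟩ := pot_finite hCM hzs hz
      have h1 := hle n z.1 z.2
      rw [Real.norm_eq_abs, abs_le]
      refine ⟨?_, h1⟩
      have h2 : clampE n (Q z.2) ≤ clampE n (P z.1) := by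
        simp only [P, Q, hp, hq, clampE_coe]
        have := h0 z
        gcongr
        linarith
      have := h0 z
      linarith
    · filter_upwards [hae] with z hz
      obtain ⟨p, q, hp, hq, hpq⟩ := pot_finite hCM hzs hz
      simp only [P, Q, hp, hq, ← hpq, sub_eq_add_neg]
      exact (clampE_tendsto p).add (clampE_tendsto q).neg
  obtain ⟨n, hn⟩ := (hlim.eventually (lt_mem_nhds (sub_lt_self _ hε))).exists
  refine ⟨_, _, hφm n, hψm n, hφi n, hψi n, hle n, ?_⟩
  have h1 := coupling_int_fst hπ (hφi n)
  have h2 := coupling_int_snd hπ (hψi n)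
  rw [integral_add h1.1 h2.1, h1.2, h2.2] at hn
  exact hn

lemma dual_le {X Y : Type*}
    [MeasurableSpace X] [MeasurableSpace Y]
    {μ : Measure X} {ν : Measure Y} {c : X × Y → ℝ}
    {π : Measure (X × Y)} (hπ : IsCoupling π μ ν) (hint : Integrable c π)
    {φ : X → ℝ} {ψ : Y → ℝ} (h1 : Integrable φ μ) (h2 : Integrable ψ ν)
    (h : ∀ x y, φ x + ψ y ≤ c (x, y)) : ∫ x, φ x ∂μ + ∫ y, ψ y ∂ν ≤ ∫ z, c z ∂π := by
  have h1 := coupling_int_fst hπ h1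
  have h2 := coupling_int_snd hπ h2
  rw [← h1.2, ← h2.2, ← integral_add h1.1 h2.1]
  exact integral_mono (h1.1.add h2.1) hint fun z => h z.1 z.2
lemma map_sum_smul {Z W : Type*} [MeasurableSpace Z] [MeasurableSpace W] (α : ENNReal) (f : Z → W)
    (hf : Measurable f) {K : ℕ} (r : Fin (K + 1) → Measure Z) :
    (∑ k, α • r k).map f = ∑ k, α • (r k).map f := by
  ext s hs
  simp only [Measure.map_apply hf hs, Measure.finsetSum_apply, Measure.smul_apply]


lemma exists_boxes {X Y : Type*} [TopologicalSpace X] [TopologicalSpace Y] {c : X × Y → ℝ}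
    (hc : Continuous c) {K : ℕ} (x : Fin (K + 1) → X) (y : Fin (K + 1) → Y) {δ : ℝ} (hδ : 0 < δ) :
    ∃ (U : Fin (K + 1) → Set X) (V : Fin (K + 1) → Set Y),
      (∀ k, IsOpen (U k) ∧ x k ∈ U k) ∧ (∀ k, IsOpen (V k) ∧ y k ∈ V k) ∧
      (∀ k, ∀ u ∈ U k, ∀ v ∈ V k, c (x k, y k) - δ ≤ c (u, v)) ∧
      (∀ k, ∀ u ∈ U k, ∀ v ∈ V (k + 1), c (u, v) ≤ c (x k, y (k + 1)) + δ) := by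
  have H1 : ∀ k, ∃ (U : Set X) (V : Set Y), IsOpen U ∧ x k ∈ U ∧ IsOpen V ∧ y k ∈ V ∧
      ∀ u ∈ U, ∀ v ∈ V, c (x k, y k) - δ ≤ c (u, v) := by
    intro k
    have hO : IsOpen {z | c (x k, y k) - δ < c z} := isOpen_lt continuous_const hc
    obtain ⟨U, V, hU, hV, hxU, hyV, hs⟩ := isOpen_prod_iff.1 hO (x k) (y k) (by
      simp [hδ])
    exact ⟨U, V, hU, hxU, hV, hyV, fun u hu v hv => le_of_lt (hs (mk_mem_prod hu hv))⟩
  have H2 : ∀ k, ∃ (U : Set X) (V : Set Y), IsOpen U ∧ x k ∈ U ∧ IsOpen V ∧ y (k + 1) ∈ V ∧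
      ∀ u ∈ U, ∀ v ∈ V, c (u, v) ≤ c (x k, y (k + 1)) + δ := by
    intro k
    have hO : IsOpen {z | c z < c (x k, y (k + 1)) + δ} := isOpen_lt hc continuous_const
    obtain ⟨U, V, hU, hV, hxU, hyV, hs⟩ := isOpen_prod_iff.1 hO (x k) (y (k + 1)) (by
      simp [hδ])
    exact ⟨U, V, hU, hxU, hV, hyV, fun u hu v hv => le_of_lt (hs (mk_mem_prod hu hv))⟩
  choose U V hU hx hV hy h using H1
  choose U' V' hU' hx' hV' hy' h' using H2
  refine ⟨fun k => U k ∩ U' k, fun k => V k ∩ V' (k - 1), fun k => ⟨(hU k).inter (hU' k), hx k, hx' k⟩,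
    fun k => ⟨(hV k).inter (hV' _), hy k, ?_⟩, ?_, ?_⟩
  · have := hy' (k - 1)
    rwa [sub_add_cancel] at this
  · intro k u hu v hv
    exact h k u hu.1 v hv.1
  · intro k u hu v hv
    refine h' k u hu.2 v ?_
    have := hv.2
    rwa [add_sub_cancel_right] at this

lemma support_cm {X Y : Type*}
    [MeasurableSpace X] [TopologicalSpace X] [PolishSpace X] [BorelSpace X]
    [MeasurableSpace Y] [TopologicalSpace Y] [PolishSpace Y] [BorelSpace Y]
    {μ : Measure X} {ν : Measure Y} [IsProbabilityMeasure μ] [IsProbabilityMeasure ν]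
    {c : X × Y → ℝ} (hc : Continuous c) {C : ℝ} (hC : ∀ z, |c z| ≤ C)
    {π : Measure (X × Y)} (hπ : IsCoupling π μ ν)
    (hopt : ∀ π', IsCoupling π' μ ν → ∫ z, c z ∂π ≤ ∫ z, c z ∂π') :
    CyclicallyMonotone c π.support := by
  have hprob := hπ.isProb
  have hci : ∀ (ρ : Measure (X × Y)) [IsFiniteMeasure ρ], Integrable c ρ := fun ρ _ =>
    Integrable.of_bound hc.measurable.aestronglyMeasurable C (Eventually.of_forall hC)
  intro K x y hxy
  by_contra! hlt
  set D := ∑ k, c (x k, y k) - ∑ k, c (x k, y (k + 1)) with hD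
  have hDpos : 0 < D := by linarith
  obtain ⟨δ, hδ, hδD⟩ : ∃ δ : ℝ, 0 < δ ∧ 2 * ((K + 1 : ℕ) * δ) < D := by
    refine ⟨D / (4 * (K + 1 : ℕ)), by positivity, ?_⟩
    field_simp
    norm_num
  obtain ⟨U, V, hU, hV, hlow, hup⟩ := exists_boxes hc x y hδ
  have hApos : ∀ k, 0 < π (U k ×ˢ V k) := fun k =>
    (Measure.mem_support_iff_forall _).1 (hxy k) _
      (((hU k).1.prod (hV k).1).mem_nhds ⟨(hU k).2, (hV k).2⟩)
  have hAm : ∀ k, MeasurableSet (U k ×ˢ V k) := fun k =>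
    (hU k).1.measurableSet.prod (hV k).1.measurableSet
  -- conditional measures
  let p : Fin (K + 1) → Measure (X × Y) := fun k => (π (U k ×ˢ V k))⁻¹ • π.restrict (U k ×ˢ V k)
  have hp : ∀ k, IsProbabilityMeasure (p k) := fun k => ⟨by
    simp only [p, Measure.smul_apply, Measure.restrict_apply_univ, smul_eq_mul]
    exact ENNReal.inv_mul_cancel (hApos k).ne' (measure_ne_top _ _)⟩
  have hpae : ∀ k, ∀ᵐ z ∂(p k), z ∈ U k ×ˢ V k := fun k =>
    Measure.ae_smul_measure (ae_restrict_mem (hAm k)) _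
  let q : Fin (K + 1) → Measure (X × Y) := fun k =>
    ((p k).map Prod.fst).prod ((p (k + 1)).map Prod.snd)
  have hpf : ∀ k, IsProbabilityMeasure ((p k).map Prod.fst) := fun k =>
    Measure.isProbabilityMeasure_map measurable_fst.aemeasurable
  have hps : ∀ k, IsProbabilityMeasure ((p k).map Prod.snd) := fun k =>
    Measure.isProbabilityMeasure_map measurable_snd.aemeasurable
  have hq : ∀ k, IsProbabilityMeasure (q k) := fun k => inferInstance
  have hqae : ∀ k, ∀ᵐ z ∂(q k), z.1 ∈ U k ∧ z.2 ∈ V (k + 1) := by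
    intro k
    have h1 : ∀ᵐ x ∂((p k).map Prod.fst), x ∈ U k := by
      refine (ae_map_iff (p := fun x => x ∈ U k) measurable_fst.aemeasurable (hU k).1.measurableSet).2 ?_
      filter_upwards [hpae k] with z hz using hz.1
    have h2 : ∀ᵐ x ∂((p (k + 1)).map Prod.snd), x ∈ V (k + 1) := by
      refine (ae_map_iff (p := fun x => x ∈ V (k + 1)) measurable_snd.aemeasurable
        (hV _).1.measurableSet).2 ?_
      filter_upwards [hpae (k + 1)] with z hz using hz.2
    have h3 := Measure.quasiMeasurePreserving_fst (μ := (p k).map Prod.fst)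
      (ν := (p (k + 1)).map Prod.snd) |>.ae h1
    have h4 := Measure.quasiMeasurePreserving_snd (μ := (p k).map Prod.fst)
      (ν := (p (k + 1)).map Prod.snd) |>.ae h2
    filter_upwards [h3, h4] with z h5 h6 using ⟨h5, h6⟩
  -- the weight
  obtain ⟨k₀, hk₀⟩ := Finite.exists_min (fun k => π (U k ×ˢ V k))
  set m := π (U k₀ ×ˢ V k₀) with hm
  let α : ENNReal := m / (K + 1 : ℕ)
  have hα0 : α ≠ 0 := (ENNReal.div_pos (hApos k₀).ne' (by simp)).ne'
  have hαt : α ≠ ⊤ := (ENNReal.div_lt_top (measure_ne_top _ _) (by simp)).ne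
  have hαp : ∀ k, α • p k ≤ ((K + 1 : ℕ) : ENNReal)⁻¹ • π := by
    intro k
    refine Measure.le_iff.2 fun s hs => ?_
    simp only [Measure.smul_apply, smul_eq_mul, p, α, div_eq_mul_inv]
    calc m * ((K + 1 : ℕ) : ENNReal)⁻¹ * ((π (U k ×ˢ V k))⁻¹ * π.restrict (U k ×ˢ V k) s)
        ≤ π (U k ×ˢ V k) * ((K + 1 : ℕ) : ENNReal)⁻¹ * ((π (U k ×ˢ V k))⁻¹ * π s) := by
          gcongr
          · exact hk₀ k
          · exact Measure.restrict_le_self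
      _ = (π (U k ×ˢ V k) * (π (U k ×ˢ V k))⁻¹) * (((K + 1 : ℕ) : ENNReal)⁻¹ * π s) := by ring
      _ = _ := by rw [ENNReal.mul_inv_cancel (hApos k).ne' (measure_ne_top _ _), one_mul]
  let ρ : Measure (X × Y) := ∑ k, α • p k
  have hρle : ρ ≤ π := by
    calc ρ ≤ ∑ _k : Fin (K + 1), ((K + 1 : ℕ) : ENNReal)⁻¹ • π := Finset.sum_le_sum fun k _ => hαp k
      _ = π := by
        rw [Finset.sum_const, Finset.card_univ, Fintype.card_fin, ← Nat.cast_smul_eq_nsmul ENNReal,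
          smul_smul, ENNReal.mul_inv_cancel (by simp) (by simp), one_smul]
  have hρf : IsFiniteMeasure ρ := isFiniteMeasure_of_le π hρle
  let σ : Measure (X × Y) := ∑ k, α • q k
  have hσfin : IsFiniteMeasure σ := by
    constructor
    simp only [σ, Measure.finsetSum_apply, Measure.smul_apply, measure_univ, smul_eq_mul, mul_one]
    exact ENNReal.sum_lt_top.2 fun _ _ => hαt.lt_top
  have hsub : π - ρ + ρ = π := Measure.sub_add_cancel_of_le hρle
  have hsubf : IsFiniteMeasure (π - ρ) := isFiniteMeasure_of_le π Measure.sub_le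
  have hqf : ∀ k, (q k).map Prod.fst = (p k).map Prod.fst := fun k => by
    simp only [q]
    rw [Measure.map_fst_prod, measure_univ, one_smul]
  have hqs : ∀ k, (q k).map Prod.snd = (p (k + 1)).map Prod.snd := fun k => by
    simp only [q]
    rw [Measure.map_snd_prod, measure_univ, one_smul]
  have hcoup : IsCoupling (π - ρ + σ) μ ν := by
    constructor
    · rw [Measure.map_add _ _ measurable_fst, ← hπ.1]
      conv_rhs => rw [← hsub, Measure.map_add _ _ measurable_fst]
      congr 1
      simp only [σ, ρ]
      rw [map_sum_smul α Prod.fst measurable_fst, map_sum_smul α Prod.fst measurable_fst]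
      exact Finset.sum_congr rfl fun k _ => by rw [hqf]
    · rw [Measure.map_add _ _ measurable_snd, ← hπ.2]
      conv_rhs => rw [← hsub, Measure.map_add _ _ measurable_snd]
      congr 1
      simp only [σ, ρ]
      rw [map_sum_smul α Prod.snd measurable_snd, map_sum_smul α Prod.snd measurable_snd]
      simp only [hqs]
      exact Equiv.sum_comp (Equiv.addRight (1 : Fin (K + 1))) (fun k => α • (p k).map Prod.snd)
  have h1 := hopt _ hcoup
  have h2 : ∫ z, c z ∂π = ∫ z, c z ∂(π - ρ) + ∫ z, c z ∂ρ := by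
    rw [← integral_add_measure (hci _) (hci _), hsub]
  rw [integral_add_measure (hci _) (hci _), h2] at h1
  have h3 : ∫ z, c z ∂ρ = ∑ k, α.toReal * ∫ z, c z ∂(p k) := by
    simp only [ρ]
    rw [integral_finsetSum_measure fun k _ => (hci (p k)).smul_measure hαt]
    simp only [integral_smul_measure, smul_eq_mul]
  have h4 : ∫ z, c z ∂σ = ∑ k, α.toReal * ∫ z, c z ∂(q k) := by
    simp only [σ]
    rw [integral_finsetSum_measure fun k _ => (hci (q k)).smul_measure hαt]
    simp only [integral_smul_measure, smul_eq_mul]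
  have h5 : ∀ k, c (x k, y k) - δ ≤ ∫ z, c z ∂(p k) := fun k => by
    have := integral_mono_ae (integrable_const (c (x k, y k) - δ)) (hci (p k)) (by
      filter_upwards [hpae k] with z hz using hlow k z.1 hz.1 z.2 hz.2)
    simpa using this
  have h6 : ∀ k, ∫ z, c z ∂(q k) ≤ c (x k, y (k + 1)) + δ := fun k => by
    have := integral_mono_ae (hci (q k)) (integrable_const (c (x k, y (k + 1)) + δ)) (by
      filter_upwards [hqae k] with z hz using hup k z.1 hz.1 z.2 hz.2)
    simpa using this
  have hαr : 0 < α.toReal := ENNReal.toReal_pos hα0 hαt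
  have h7 : ∑ k, α.toReal * ∫ z, c z ∂(p k) ≤ ∑ k, α.toReal * ∫ z, c z ∂(q k) := by
    rw [← h3, ← h4]; linarith
  rw [← Finset.mul_sum, ← Finset.mul_sum] at h7
  have h8 := le_of_mul_le_mul_left h7 hαr
  have h9 : ∑ k, (c (x k, y k) - δ) ≤ ∑ k, (c (x k, y (k + 1)) + δ) :=
    (Finset.sum_le_sum fun k _ => h5 k).trans (h8.trans (Finset.sum_le_sum fun k _ => h6 k))
  rw [Finset.sum_sub_distrib, Finset.sum_add_distrib, Finset.sum_const, Finset.card_univ,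
    Fintype.card_fin, nsmul_eq_mul] at h9
  linarith

lemma isCompact_couplings {X Y : Type*}
    [MeasurableSpace X] [TopologicalSpace X] [PolishSpace X] [BorelSpace X]
    [MeasurableSpace Y] [TopologicalSpace Y] [PolishSpace Y] [BorelSpace Y]
    (μ : Measure X) (ν : Measure Y) [IsProbabilityMeasure μ] [IsProbabilityMeasure ν] :
    IsCompact {P : ProbabilityMeasure (X × Y) | IsCoupling (P : Measure (X × Y)) μ ν} := by
  let _ := TopologicalSpace.upgradeIsCompletelyMetrizable X
  let _ := TopologicalSpace.upgradeIsCompletelyMetrizable Y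
  have hcl : IsClosed {P : ProbabilityMeasure (X × Y) | IsCoupling (P : Measure (X × Y)) μ ν} := by
    have h1 : IsClosed {P : ProbabilityMeasure (X × Y) |
        P.map (continuous_fst (X := X) (Y := Y)).measurable.aemeasurable
          = (⟨μ, inferInstance⟩ : ProbabilityMeasure X)} :=
      isClosed_eq (ProbabilityMeasure.continuous_map continuous_fst) continuous_const
    have h2 : IsClosed {P : ProbabilityMeasure (X × Y) |
        P.map (continuous_snd (X := X) (Y := Y)).measurable.aemeasurable
          = (⟨ν, inferInstance⟩ : ProbabilityMeasure Y)} :=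
      isClosed_eq (ProbabilityMeasure.continuous_map continuous_snd) continuous_const
    convert h1.inter h2 using 1
    ext P
    constructor
    · rintro ⟨h3, h4⟩
      exact ⟨Subtype.ext h3, Subtype.ext h4⟩
    · rintro ⟨h3, h4⟩
      exact ⟨congrArg Subtype.val h3, congrArg Subtype.val h4⟩
  rw [← hcl.closure_eq]
  apply isCompact_closure_of_isTightMeasureSet
  apply IsTightMeasureSet.prodMk
  · refine (isTightMeasureSet_singleton (μ := μ)).subset ?_
    rintro _ ⟨_, ⟨P, hP, rfl⟩, rfl⟩
    exact hP.1
  · refine (isTightMeasureSet_singleton (μ := ν)).subset ?_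
    rintro _ ⟨_, ⟨P, hP, rfl⟩, rfl⟩
    exact hP.2

lemma exists_approx {Z : Type*} [TopologicalSpace Z] [TopologicalSpace.MetrizableSpace Z] {c : Z → ℝ}
    (hc : LowerSemicontinuous c) (h0 : ∀ z, 0 ≤ c z) :
    ∃ f : ℕ → Z → ℝ, (∀ n, Continuous (f n)) ∧ (∀ n z, 0 ≤ f n z) ∧ (∀ n z, f n z ≤ n) ∧
      (∀ n z, f n z ≤ c z) ∧ (∀ z, Monotone fun n => f n z) ∧
      ∀ z, Tendsto (fun n => f n z) atTop (𝓝 (c z)) := by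
  let _ := TopologicalSpace.metrizableSpaceMetric Z
  let f : ℕ → Z → ℝ := fun n z => ⨅ w, (min (c w) n + n * dist z w)
  have ht : ∀ (n : ℕ) z w, 0 ≤ min (c w) (n : ℝ) + n * dist z w := fun n z w =>
    add_nonneg (le_min (h0 w) n.cast_nonneg) (by positivity)
  have hbd : ∀ (n : ℕ) z, BddBelow (range fun w => min (c w) (n : ℝ) + n * dist z w) := fun n z =>
    ⟨0, by rintro _ ⟨w, rfl⟩; exact ht n z w⟩
  have hle : ∀ (n : ℕ) z w, f n z ≤ min (c w) (n : ℝ) + n * dist z w := fun n z w => ciInf_le (hbd n z) w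
  have hle' : ∀ (n : ℕ) z, f n z ≤ min (c z) (n : ℝ) := fun n z => by simpa using hle n z z
  have hlip : ∀ (n : ℕ) z z', f n z ≤ f n z' + n * dist z z' := by
    intro n z z'
    have : Nonempty Z := ⟨z⟩
    rw [← sub_le_iff_le_add]
    refine le_ciInf fun w => ?_
    have h1 := hle n z w
    have h2 : (n : ℝ) * dist z w ≤ n * (dist z z' + dist z' w) := by
      gcongr
      exact dist_triangle _ _ _
    linarith
  have hmono : ∀ z, Monotone fun n => f n z := by
    intro z n m hnm
    have : Nonempty Z := ⟨z⟩
    refine le_ciInf fun w => (hle n z w).trans ?_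
    gcongr
  refine ⟨f, ?_, ?_, ?_, ?_, hmono, ?_⟩
  · intro n
    have : LipschitzWith n (f n) := LipschitzWith.of_le_add_mul _ fun z z' => by
      simpa using hlip n z z'
    exact this.continuous
  · intro n z
    exact Real.iInf_nonneg fun w => ht n z w
  · intro n z
    exact (hle' n z).trans (min_le_right _ _)
  · intro n z
    exact (hle' n z).trans (min_le_left _ _)
  · intro z
    rw [Metric.tendsto_atTop]
    intro ε hε
    obtain ⟨r, hr, hball⟩ := Metric.eventually_nhds_iff.1 (hc z (c z - ε / 2) (by linarith))
    obtain ⟨N, hN⟩ := exists_nat_ge (c z)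
    obtain ⟨M, hM⟩ := exists_nat_ge (c z / r)
    refine ⟨max N M, fun n hn => ?_⟩
    have : Nonempty Z := ⟨z⟩
    have hn1 : c z ≤ n := hN.trans (by exact_mod_cast (le_max_left _ _).trans hn)
    have hn2 : c z / r ≤ n := hM.trans (by exact_mod_cast (le_max_right _ _).trans hn)
    rw [div_le_iff₀ hr] at hn2
    have hlow : c z - ε / 2 ≤ f n z := by
      refine le_ciInf fun w => ?_
      by_cases hw : dist w z < r
      · have h1 := hball hw
        have h2 : c z - ε / 2 ≤ min (c w) n := le_min h1.le (by linarith)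
        have : (0 : ℝ) ≤ n * dist z w := by positivity
        linarith
      · have h1 : (n : ℝ) * r ≤ n * dist z w := by
          gcongr
          rw [dist_comm]; exact not_lt.1 hw
        have h2 : 0 ≤ min (c w) (n : ℝ) := le_min (h0 w) n.cast_nonneg
        linarith
    have := (hle' n z).trans (min_le_left _ _)
    rw [Real.dist_eq, abs_lt]
    constructor <;> linarith

lemma exists_dual_of_opt {X Y : Type*}
    [MeasurableSpace X] [TopologicalSpace X] [PolishSpace X] [BorelSpace X]
    [MeasurableSpace Y] [TopologicalSpace Y] [PolishSpace Y] [BorelSpace Y]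
    {μ : Measure X} {ν : Measure Y} [IsProbabilityMeasure μ] [IsProbabilityMeasure ν]
    {c : X × Y → ℝ} (hc : LowerSemicontinuous c) (h0 : ∀ z, 0 ≤ c z)
    {π : Measure (X × Y)} (hπ : IsCoupling π μ ν)
    (hopt : ∀ π', IsCoupling π' μ ν → Integrable c π' → ∫ z, c z ∂π ≤ ∫ z, c z ∂π')
    {ε : ℝ} (hε : 0 < ε) :
    ∃ (φ : X → ℝ) (ψ : Y → ℝ), Measurable φ ∧ Measurable ψ ∧ Integrable φ μ ∧ Integrable ψ ν ∧
      (∀ x y, φ x + ψ y ≤ c (x, y)) ∧ ∫ z, c z ∂π - ε < ∫ x, φ x ∂μ + ∫ y, ψ y ∂ν := by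
  have := hπ.isProb
  obtain ⟨f, hfc, hf0, hfn, hfle, hfmono, hflim⟩ := exists_approx hc h0
  set S := {P : ProbabilityMeasure (X × Y) | IsCoupling (P : Measure (X × Y)) μ ν} with hS
  have hScomp : IsCompact S := isCompact_couplings μ ν
  have hfabs : ∀ n z, |f n z| ≤ n := fun n z => by rw [abs_of_nonneg (hf0 n z)]; exact hfn n z
  have hfi : ∀ n (P : Measure (X × Y)) [IsFiniteMeasure P], Integrable (f n) P := fun n P _ =>
    Integrable.of_bound (hfc n).measurable.aestronglyMeasurable n (Eventually.of_forall (hfabs n))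
  have hcont : ∀ n, Continuous fun P : ProbabilityMeasure (X × Y) => ∫ z, f n z ∂(P : Measure (X × Y)) := by
    intro n
    exact ProbabilityMeasure.continuous_integral_boundedContinuousFunction
      (BoundedContinuousFunction.ofNormedAddCommGroup (f n) (hfc n) n (hfabs n))
  set r := ∫ z, c z ∂π - ε / 2 with hr
  have key : ∃ n, ∀ P ∈ S, r < ∫ z, f n z ∂(P : Measure (X × Y)) := by
    by_contra! hcon
    have hcl : ∀ n, IsClosed (S ∩ {P | ∫ z, f n z ∂(P : Measure (X × Y)) ≤ r}) := fun n =>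
      hScomp.isClosed.inter (isClosed_le (hcont n) continuous_const)
    obtain ⟨P, hP⟩ := IsCompact.nonempty_iInter_of_sequence_nonempty_isCompact_isClosed
      (fun n => S ∩ {P | ∫ z, f n z ∂(P : Measure (X × Y)) ≤ r})
      (fun n P hP => ⟨hP.1, le_trans (integral_mono (hfi _ _) (hfi _ _)
        fun z => hfmono z n.le_succ) hP.2⟩)
      (fun n => by obtain ⟨P, h1, h2⟩ := hcon n; exact ⟨P, h1, h2⟩)
      (hScomp.inter_right (isClosed_le (hcont 0) continuous_const)) hcl
    rw [mem_iInter] at hP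
    have hPS := (hP 0).1
    have hlin : ∫⁻ z, ENNReal.ofReal (c z) ∂(P : Measure (X × Y)) ≤ ENNReal.ofReal r := by
      have hl := lintegral_tendsto_of_tendsto_of_monotone (μ := (P : Measure (X × Y)))
        (f := fun n z => ENNReal.ofReal (f n z)) (F := fun z => ENNReal.ofReal (c z))
        (fun n => (hfc n).measurable.ennreal_ofReal.aemeasurable)
        (Eventually.of_forall fun z n m hnm => ENNReal.ofReal_le_ofReal (hfmono z hnm))
        (Eventually.of_forall fun z => ENNReal.tendsto_ofReal (hflim z))
      refine le_of_tendsto' hl fun n => ?_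
      rw [← ofReal_integral_eq_lintegral_ofReal (hfi n _) (Eventually.of_forall (hf0 n))]
      exact ENNReal.ofReal_le_ofReal (hP n).2
    have hci : Integrable c (P : Measure (X × Y)) := by
      refine ⟨hc.measurable.aestronglyMeasurable, ?_⟩
      rw [hasFiniteIntegral_iff_ofReal (Eventually.of_forall h0)]
      exact hlin.trans_lt ENNReal.ofReal_lt_top
    rw [← ofReal_integral_eq_lintegral_ofReal hci (Eventually.of_forall h0)] at hlin
    have hr0 : 0 ≤ r := (integral_nonneg (hf0 0)).trans (hP 0).2
    have h1 := (ENNReal.ofReal_le_ofReal_iff hr0).1 hlin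
    have h2 := hopt _ hPS hci
    linarith
  obtain ⟨n, hn⟩ := key
  have hne : S.Nonempty := ⟨⟨π, inferInstance⟩, hπ⟩
  obtain ⟨P, hPS, hPmin⟩ := hScomp.exists_isMinOn hne (hcont n).continuousOn
  have hcm : CyclicallyMonotone (f n) (P : Measure (X × Y)).support := by
    refine support_cm (hfc n) (hfabs n) hPS fun π' hπ' => ?_
    have := hπ'.isProb
    exact hPmin (show (⟨π', inferInstance⟩ : ProbabilityMeasure (X × Y)) ∈ S from hπ')
  obtain ⟨φ, ψ, h1, h2, h3, h4, h5, h6⟩ := exists_dual_of_cm (hfc n).lowerSemicontinuous (hf0 n) hPS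
    (hfi n _) Measure.isClosed_support.measurableSet hcm Measure.measure_compl_support (half_pos hε)
  refine ⟨φ, ψ, h1, h2, h3, h4, fun x y => (h5 x y).trans (hfle n _), ?_⟩
  have := hn P hPS
  linarith

lemma cm_of_dual_seq {X Y : Type*} {c : X × Y → ℝ} {φ : ℕ → X → ℝ} {ψ : ℕ → Y → ℝ}
    (h : ∀ n x y, φ n x + ψ n y ≤ c (x, y)) :
    CyclicallyMonotone c {z | Tendsto (fun n => c z - (φ n z.1 + ψ n z.2)) atTop (𝓝 0)} := by
  intro K x y hxy
  have h1 : Tendsto (fun n => ∑ k, (c (x k, y k) - (φ n (x k) + ψ n (y k)))) atTop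
      (𝓝 (∑ _k : Fin (K + 1), (0 : ℝ))) := tendsto_finsetSum _ fun k _ => hxy k
  rw [Finset.sum_const_zero] at h1
  have h2 : ∀ n, ∑ k, c (x k, y k) - ∑ k, c (x k, y (k + 1)) ≤
      ∑ k, (c (x k, y k) - (φ n (x k) + ψ n (y k))) := by
    intro n
    rw [Finset.sum_sub_distrib]
    have h3 : ∑ k, (φ n (x k) + ψ n (y k)) ≤ ∑ k, c (x k, y (k + 1)) := by
      have h4 : ∑ k, ψ n (y (k + 1)) = ∑ k, ψ n (y k) :=
        Equiv.sum_comp (Equiv.addRight (1 : Fin (K + 1))) (fun k => ψ n (y k))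
      rw [Finset.sum_add_distrib, ← h4, ← Finset.sum_add_distrib]
      exact Finset.sum_le_sum fun k _ => h n _ _
    linarith
  have := ge_of_tendsto' h1 h2
  linarith

lemma opt_iff_nonneg {X Y : Type*}
    [MeasurableSpace X] [TopologicalSpace X] [PolishSpace X] [BorelSpace X]
    [MeasurableSpace Y] [TopologicalSpace Y] [PolishSpace Y] [BorelSpace Y]
    {μ : Measure X} {ν : Measure Y} [IsProbabilityMeasure μ] [IsProbabilityMeasure ν]
    {c : X × Y → ℝ} (hc : LowerSemicontinuous c) (h0 : ∀ z, 0 ≤ c z)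
    {π : Measure (X × Y)} (hπ : IsCoupling π μ ν) (hint : Integrable c π) :
    (∀ π', IsCoupling π' μ ν → Integrable c π' → ∫ z, c z ∂π ≤ ∫ z, c z ∂π') ↔
      ∃ Γ : Set (X × Y), MeasurableSet Γ ∧ CyclicallyMonotone c Γ ∧ π Γᶜ = 0 := by
  constructor
  · intro hopt
    have H : ∀ n : ℕ, ∃ (φ : X → ℝ) (ψ : Y → ℝ), Measurable φ ∧ Measurable ψ ∧ Integrable φ μ ∧
        Integrable ψ ν ∧ (∀ x y, φ x + ψ y ≤ c (x, y)) ∧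
        ∫ z, c z ∂π - 1 / ((n : ℝ) + 1) < ∫ x, φ x ∂μ + ∫ y, ψ y ∂ν := fun n =>
      exists_dual_of_opt hc h0 hπ hopt Nat.one_div_pos_of_nat
    choose φ ψ hφ hψ hφi hψi hle hlt using H
    let g : ℕ → X × Y → ℝ := fun n z => c z - (φ n z.1 + ψ n z.2)
    have hgm : ∀ n, Measurable (g n) := fun n =>
      hc.measurable.sub (((hφ n).comp measurable_fst).add ((hψ n).comp measurable_snd))
    have hg0 : ∀ n z, 0 ≤ g n z := fun n z => sub_nonneg.2 (hle n z.1 z.2)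
    have hgi : ∀ n, Integrable (g n) π := fun n =>
      hint.sub ((coupling_int_fst hπ (hφi n)).1.add (coupling_int_snd hπ (hψi n)).1)
    have hgint : ∀ n, ∫ z, g n z ∂π ≤ 1 / ((n : ℝ) + 1) := by
      intro n
      have h1 := coupling_int_fst hπ (hφi n)
      have h2 := coupling_int_snd hπ (hψi n)
      have h3 : ∫ z, g n z ∂π = ∫ z, c z ∂π - (∫ x, φ n x ∂μ + ∫ y, ψ n y ∂ν) := by
        rw [← h1.2, ← h2.2, ← integral_add h1.1 h2.1]
        exact integral_sub hint (h1.1.add h2.1)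
      have := hlt n
      linarith
    have hL1 : Tendsto (fun n => eLpNorm (g n - 0) 1 π) atTop (𝓝 0) := by
      have h1 : ∀ n, eLpNorm (g n - 0) 1 π ≤ ENNReal.ofReal (1 / ((n : ℝ) + 1)) := by
        intro n
        rw [sub_zero, eLpNorm_one_eq_lintegral_enorm]
        have h2 : ∀ z, ‖g n z‖ₑ = ENNReal.ofReal (g n z) := fun z =>
          Real.enorm_of_nonneg (hg0 n z)
        simp only [h2]
        rw [← ofReal_integral_eq_lintegral_ofReal (hgi n) (Eventually.of_forall (hg0 n))]
        exact ENNReal.ofReal_le_ofReal (hgint n)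
      refine tendsto_of_tendsto_of_tendsto_of_le_of_le tendsto_const_nhds ?_
        (fun n => zero_le) h1
      have := ENNReal.tendsto_ofReal (tendsto_one_div_add_atTop_nhds_zero_nat (𝕜 := ℝ))
      simpa using this
    have hmeas := tendstoInMeasure_of_tendsto_eLpNorm one_ne_zero
      (fun n => (hgm n).aestronglyMeasurable) aestronglyMeasurable_zero hL1
    obtain ⟨ns, -, hns⟩ := hmeas.exists_seq_tendsto_ae
    refine ⟨{z | Tendsto (fun n => g (ns n) z) atTop (𝓝 0)}, ?_, ?_, ?_⟩
    · exact measurableSet_tendsto _ fun n => hgm (ns n)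
    · exact cm_of_dual_seq (φ := fun n => φ (ns n)) (ψ := fun n => ψ (ns n)) fun n => hle (ns n)
    · exact hns
  · rintro ⟨Γ, hΓm, hΓ, hΓ0⟩ π' hπ' hint'
    refine le_of_forall_pos_le_add fun ε hε => ?_
    obtain ⟨φ, ψ, -, -, h1, h2, h3, h4⟩ := exists_dual_of_cm hc h0 hπ hint hΓm hΓ hΓ0 hε
    have := dual_le hπ' hint' h1 h2 h3
    linarith

lemma cm_shift {X Y : Type*} {c : X × Y → ℝ} {a : X → ℝ} {b : Y → ℝ} {Γ : Set (X × Y)} :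
    CyclicallyMonotone (fun z => c z - (a z.1 + b z.2)) Γ ↔ CyclicallyMonotone c Γ := by
  unfold CyclicallyMonotone
  refine forall_congr' fun K => forall_congr' fun x => forall_congr' fun y =>
    forall_congr' fun _ => ?_
  have h4 : ∑ k, b (y (k + 1)) = ∑ k, b (y k) :=
    Equiv.sum_comp (Equiv.addRight (1 : Fin (K + 1))) (fun k => b (y k))
  simp only [Finset.sum_sub_distrib, Finset.sum_add_distrib, h4]
  exact sub_le_sub_iff_right _

/-- A coupling with finite cost is optimal if and only if it is concentrated on a
`c`-cyclically monotone set. -/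
theorem optimal_iff_cyclically_monotone
    {X Y : Type*}
    [MeasurableSpace X] [TopologicalSpace X] [PolishSpace X] [BorelSpace X]
    [MeasurableSpace Y] [TopologicalSpace Y] [PolishSpace Y] [BorelSpace Y]
    (μ : Measure X) (ν : Measure Y) [IsProbabilityMeasure μ] [IsProbabilityMeasure ν]
    (c : X × Y → ℝ) (hc : LowerSemicontinuous c)
    (a : X → ℝ) (b : Y → ℝ)
    (ha : UpperSemicontinuous a) (hb : UpperSemicontinuous b)
    (hai : Integrable a μ) (hbi : Integrable b ν)
    (hab : ∀ x y, a x + b y ≤ c (x, y))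
    (π : Measure (X × Y)) (hπ : IsCoupling π μ ν) (hint : Integrable c π) :
    (∫ z, c z ∂π
        = sInf {r : ℝ | ∃ π' : Measure (X × Y), IsCoupling π' μ ν ∧ Integrable c π' ∧
            r = ∫ z, c z ∂π'})
      ↔ ∃ Γ : Set (X × Y), MeasurableSet Γ ∧ CyclicallyMonotone c Γ ∧ π Γᶜ = 0 := by
  have hshift : ∀ π', IsCoupling π' μ ν → Integrable c π' →
      Integrable (fun z => c z - (a z.1 + b z.2)) π' ∧
      ∫ z, (c z - (a z.1 + b z.2)) ∂π' = ∫ z, c z ∂π' - (∫ x, a x ∂μ + ∫ y, b y ∂ν) := by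
    intro π' hπ' hi
    have h1 := coupling_int_fst hπ' hai
    have h2 := coupling_int_snd hπ' hbi
    refine ⟨hi.sub (h1.1.add h2.1), ?_⟩
    rw [← h1.2, ← h2.2, ← integral_add h1.1 h2.1]
    exact integral_sub hi (h1.1.add h2.1)
  have hunshift : ∀ π', IsCoupling π' μ ν → Integrable (fun z => c z - (a z.1 + b z.2)) π' →
      Integrable c π' := by
    intro π' hπ' hi
    have h1 := coupling_int_fst hπ' hai
    have h2 := coupling_int_snd hπ' hbi
    have h3 := hi.add (h1.1.add h2.1)
    refine h3.congr (Filter.Eventually.of_forall fun z => ?_)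
    simp
  have hlsc : LowerSemicontinuous (fun z : X × Y => c z - (a z.1 + b z.2)) := by
    have h1 : LowerSemicontinuous (fun z : X × Y => -a z.1) :=
      (ha.comp continuous_fst).neg
    have h2 : LowerSemicontinuous (fun z : X × Y => -b z.2) :=
      (hb.comp continuous_snd).neg
    have h3 := hc.add (h1.add h2)
    have h4 : (fun z : X × Y => c z - (a z.1 + b z.2)) = fun z => c z + (-a z.1 + -b z.2) := by
      funext z; ring
    rw [h4]
    exact h3
  have hnn : ∀ z : X × Y, 0 ≤ c z - (a z.1 + b z.2) := fun z => sub_nonneg.2 (hab z.1 z.2)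
  have hmain := opt_iff_nonneg hlsc hnn hπ (hshift π hπ hint).1
  simp only [cm_shift] at hmain
  rw [← hmain]
  have hbdd : BddBelow {r : ℝ | ∃ π' : Measure (X × Y), IsCoupling π' μ ν ∧ Integrable c π' ∧
            r = ∫ z, c z ∂π'} := by
    refine ⟨∫ x, a x ∂μ + ∫ y, b y ∂ν, ?_⟩
    rintro _ ⟨π', h1, h2, rfl⟩
    exact dual_le h1 h2 hai hbi hab
  constructor
  · intro h π' h1 h2
    have h3 := hunshift π' h1 h2
    rw [(hshift π hπ hint).2, (hshift π' h1 h3).2]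
    have := csInf_le hbdd ⟨π', h1, h3, rfl⟩
    linarith
  · intro h
    refine le_antisymm (le_csInf ⟨_, π, hπ, hint, rfl⟩ ?_) (csInf_le hbdd ⟨π, hπ, hint, rfl⟩)
    rintro _ ⟨π', h1, h2, rfl⟩
    have := h π' h1 (hshift π' h1 h2).1
    rw [(hshift π hπ hint).2, (hshift π' h1 h2).2] at this
    linarith
end

section
/- (Multi-marginal optimal transport with strictly submodular cost on ℝ) Let μ₁,…,μ_K be Borel probability measures on compact subsets X₁,…,X_K of ℝ, each absolutely continuous with respect to Lebesgue measure, and let c : ℝ^K → ℝ be continuous, bounded, and strictly submodular. Then the Kantorovich problem inf over couplings π ∈ M(μ₁,…,μ_K) of ∫ c dπ, its dual sup over (φ₁,…,φ_K) with Σ_k φ_k(x_k) ≤ c(x₁,…,x_K) of Σ_k ∫ φ_k dμ_k, and the Monge problem inf over maps F₂,…,F_K with (F_k)_# μ₁ = μ_k of ∫ c(x₁,F₂(x₁),…,F_K(x₁)) dμ₁ all admit solutions and have equal values; moreover the Monge problem has a μ₁-almost surely unique solution (F₂,…,F_K) in which each F_k is non-decreasing. -/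
open MeasureTheory Set

/-- A multi-marginal coupling: a measure on `ℝ^K` whose `k`-th marginal is `μ k`. -/
def IsMCoupling {K : ℕ} (π : Measure (Fin K → ℝ)) (μ : Fin K → Measure ℝ) : Prop :=
  ∀ k, π.map (fun f => f k) = μ k

/-- `c : ℝ^K → ℝ` is strictly submodular:
`c(x + t eᵢ + s eⱼ) + c(x) < c(x + t eᵢ) + c(x + s eⱼ)` for all `x`, `t, s > 0` and `i ≠ j`. -/
def StrictlySubmodular {K : ℕ} (c : (Fin K → ℝ) → ℝ) : Prop :=
  ∀ (x : Fin K → ℝ) (t s : ℝ), 0 < t → 0 < s → ∀ i j : Fin K, i ≠ j →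
    c (x + t • (Pi.single i 1 : Fin K → ℝ) + s • (Pi.single j 1 : Fin K → ℝ)) + c x
      < c (x + t • (Pi.single i 1 : Fin K → ℝ)) + c (x + s • (Pi.single j 1 : Fin K → ℝ))

/-- A family of maps is Monge-feasible if the first one is the identity and each pushes the
first marginal forward to the corresponding marginal. -/
def MongeFeasible {K : ℕ} [NeZero K] (μ : Fin K → Measure ℝ)
    (T : Fin K → ℝ → ℝ) : Prop :=
  T 0 = id ∧ ∀ k, Measurable (T k) ∧ (μ 0).map (T k) = μ k


theorem fin_lem1 {ι : Type*} [DecidableEq ι] (f : Finset ι → ℝ) (U : Finset ι)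
    (h : ∀ s : Finset ι, ∀ i ∈ U, ∀ j ∈ U, i ≠ j → i ∉ s → j ∉ s →
      f (insert i (insert j s)) + f s < f (insert i s) + f (insert j s))
    (b : Finset ι) (i : ι) (hi : i ∈ U) (hib : i ∉ b) (s : Finset ι) (hs : s.Nonempty) :
    s ⊆ U → i ∉ s → Disjoint s b → f (insert i (s ∪ b)) + f b < f (s ∪ b) + f (insert i b) := by
  induction hs using Finset.Nonempty.cons_induction with
  | singleton a =>
    intro hU his hd
    have := h b i hi a (hU (by simp)) (by rintro rfl; simp at his) hib (by simpa using hd)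
    have e : ({a} : Finset ι) ∪ b = insert a b := rfl
    rw [e]; linarith
  | cons a s has hs ih =>
    intro hU his hd
    simp only [Finset.cons_eq_insert, Finset.insert_subset_iff, Finset.mem_insert, not_or,
      Finset.disjoint_insert_left] at hU his hd
    have h1 := ih hU.2 his.2 hd.2
    have h2 := h (s ∪ b) i hi a hU.1 his.1 (by simp [his.2, hib]) (by simp [has, hd.1])
    rw [Finset.cons_eq_insert, Finset.insert_union]
    linarith

theorem fin_lem2 {ι : Type*} [DecidableEq ι] (f : Finset ι → ℝ) (U : Finset ι)
    (h : ∀ s : Finset ι, ∀ i ∈ U, ∀ j ∈ U, i ≠ j → i ∉ s → j ∉ s →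
      f (insert i (insert j s)) + f s < f (insert i s) + f (insert j s))
    (s : Finset ι) (hs : s.Nonempty) (hsU : s ⊆ U) (t : Finset ι) (ht : t.Nonempty) :
    t ⊆ U → Disjoint s t → f (s ∪ t) + f ∅ < f s + f t := by
  induction ht using Finset.Nonempty.cons_induction with
  | singleton a =>
    intro hU hd
    have ha : a ∉ s := by simpa using hd
    have := fin_lem1 f U h ∅ a (hU (by simp)) (by simp) s hs hsU ha (by simp)
    rw [Finset.union_empty] at this
    have e : s ∪ {a} = insert a s := by rw [Finset.union_comm]; rfl
    rw [e]; exact this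
  | cons a t hat ht ih =>
    intro hU hd
    simp only [Finset.cons_eq_insert, Finset.insert_subset_iff, 
      Finset.disjoint_insert_right] at hU hd
    have h1 := ih hU.2 hd.2
    have h2 := fin_lem1 f U h t a hU.1 hat s hs hsU hd.1 hd.2
    rw [Finset.cons_eq_insert, Finset.union_insert]
    linarith

theorem strict_lattice {K : ℕ} {c : (Fin K → ℝ) → ℝ} (hsub : StrictlySubmodular c)
    (a b : Fin K → ℝ) (hab : ¬ a ≤ b) (hba : ¬ b ≤ a) :
    c (a ⊓ b) + c (a ⊔ b) < c a + c b := by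
  classical
  set x := a ⊓ b with hx
  set z := a ⊔ b with hz
  set s : Finset (Fin K) := Finset.univ.filter (fun k => b k < a k) with hs
  set t : Finset (Fin K) := Finset.univ.filter (fun k => a k < b k) with ht
  have key := fin_lem2 (fun u : Finset (Fin K) => c (u.piecewise z x)) (s ∪ t) ?_ s ?_
    Finset.subset_union_left t ?_ Finset.subset_union_right ?_
  · have e1 : (s ∪ t).piecewise z x = z := by
      ext k
      simp only [Finset.piecewise, hs, ht, hx, hz, Finset.mem_union, Finset.mem_filter, 
        Finset.mem_univ, true_and, Pi.inf_apply, Pi.sup_apply]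
      split_ifs with h
      · rfl
      · push Not at h
        simp [le_antisymm h.1 h.2]
    have e2 : (s).piecewise z x = a := by
      ext k
      simp only [Finset.piecewise, hs, ht, hx, hz, Finset.mem_filter, 
        Finset.mem_univ, true_and, Pi.inf_apply, Pi.sup_apply]
      split_ifs with h
      · exact sup_eq_left.2 h.le
      · exact inf_eq_left.2 (not_lt.1 h)
    have e3 : (t).piecewise z x = b := by
      ext k
      simp only [Finset.piecewise, hs, ht, hx, hz, Finset.mem_filter, 
        Finset.mem_univ, true_and, Pi.inf_apply, Pi.sup_apply]
      split_ifs with h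
      · exact sup_eq_right.2 h.le
      · exact inf_eq_right.2 (not_lt.1 h)
    simp only [e1, e2, e3, Finset.piecewise_empty] at key
    linarith
  · intro u i hi j hj hij hiu hju
    have hlt : ∀ k ∈ s ∪ t, 0 < z k - x k := by
      intro k hk
      simp only [hs, ht, Finset.mem_union, Finset.mem_filter, Finset.mem_univ, true_and] at hk
      simp only [hx, hz, Pi.inf_apply, Pi.sup_apply, sub_pos]
      rcases hk with h | h
      · exact (inf_le_right.trans_lt h).trans_le le_sup_left
      · exact (inf_le_left.trans_lt h).trans_le le_sup_right
    have h0 := hsub (u.piecewise z x) _ _ (hlt i hi) (hlt j hj) i j hij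
    have f1 : ∀ (v : Finset (Fin K)) (l : Fin K), l ∉ v → 
        (insert l v).piecewise z x = v.piecewise z x + (z l - x l) • (Pi.single l 1 : Fin K → ℝ) := by
      intro v l hl
      ext k
      by_cases hk : k = l
      · subst hk; simp [Finset.piecewise, hl]
      · simp [Finset.piecewise, hk]
    rw [Finset.insert_comm, f1 (insert i u) j (by simp [hju, hij.symm]), f1 u i hiu, f1 u j hju]
    exact h0
  · rw [Pi.le_def] at hab; push Not at hab
    obtain ⟨k, hk⟩ := hab
    exact ⟨k, by simp [hs, hk]⟩
  · rw [Pi.le_def] at hba; push Not at hba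
    obtain ⟨k, hk⟩ := hba
    exact ⟨k, by simp [ht, hk]⟩
  · rw [Finset.disjoint_left]
    intro k hk hk'
    simp only [hs, ht, Finset.mem_filter, Finset.mem_univ, true_and] at hk hk'
    exact lt_asymm hk hk'

theorem weak_lattice {K : ℕ} {c : (Fin K → ℝ) → ℝ} (hsub : StrictlySubmodular c)
    (a b : Fin K → ℝ) : c (a ⊓ b) + c (a ⊔ b) ≤ c a + c b := by
  by_cases h1 : a ≤ b
  · rw [inf_eq_left.2 h1, sup_eq_right.2 h1]
  · by_cases h2 : b ≤ a
    · rw [inf_eq_right.2 h2, sup_eq_left.2 h2, add_comm]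
    · exact (strict_lattice hsub a b h1 h2).le

theorem grid_dual {K : ℕ} [NeZero K] {c : (Fin K → ℝ) → ℝ}
    (hw : ∀ a b : Fin K → ℝ, c (a ⊓ b) + c (a ⊔ b) ≤ c a + c b) (n : ℕ) :
    ∀ A : Fin K → Finset ℝ, (∀ k, (A k).Nonempty) → ∑ k, (A k).card = n →
    ∀ C : Finset (Fin K → ℝ), IsChain (· ≤ ·) (C : Set (Fin K → ℝ)) → (∀ p ∈ C, ∀ k, p k ∈ A k) →
    ∃ φ : Fin K → ℝ → ℝ, (∀ x : Fin K → ℝ, (∀ k, x k ∈ A k) → ∑ k, φ k (x k) ≤ c x) ∧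
      (∀ p ∈ C, ∑ k, φ k (p k) = c p) ∧
      (∀ k, ∀ a ∈ A k, ∃ x : Fin K → ℝ, (∀ j, x j ∈ A j) ∧ x k = a ∧ ∑ j, φ j (x j) = c x) ∧
      ∃ p : Fin K → ℝ, (∀ j, p j ∈ A j) ∧ ∀ k, φ k (p k) = c p / K := by
  classical
  have hK : (K : ℝ) ≠ 0 := by exact_mod_cast NeZero.ne K
  induction n using Nat.strong_induction_on with
  | _ n ih =>
  intro A hA hn C hC hCA
  set top : Fin K → ℝ := fun k => (A k).max' (hA k) with htop
  have htopA : ∀ k, top k ∈ A k := fun k => (A k).max'_mem (hA k)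
  have hle : ∀ k, ∀ a ∈ A k, a ≤ top k := fun k a ha => (A k).le_max' a ha
  by_cases hsing : ∀ k, ∀ a ∈ A k, a = top k
  · have hx : ∀ x : Fin K → ℝ, (∀ k, x k ∈ A k) → x = top := by
      intro x hx; ext k; exact hsing k _ (hx k)
    have hsum : ∑ _k : Fin K, c top / K = c top := by
      simp; field_simp
    refine ⟨fun _ _ => c top / K, ?_, ?_, ?_, top, htopA, fun _ => rfl⟩
    · intro x h; rw [hx x h]; exact hsum.le
    · intro p hp; rw [hx p (hCA p hp)]; exact hsum
    · intro k a ha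
      exact ⟨top, htopA, (hsing k a ha).symm, hsum⟩
  · have hex : ∃ i, (∃ a ∈ A i, a ≠ top i) ∧ ∀ p ∈ C, p ≠ top → p i < top i := by
      rcases (C.erase top).eq_empty_or_nonempty with he | hne
      · push Not at hsing
        obtain ⟨i, a, ha, hat⟩ := hsing
        refine ⟨i, ⟨a, ha, hat⟩, ?_⟩
        intro p hp hpt
        have : p ∈ C.erase top := Finset.mem_erase.2 ⟨hpt, hp⟩
        rw [he] at this
        simp at this
      · obtain ⟨m, hm⟩ := (C.erase top).exists_maximal hne
        have hmC := Finset.mem_erase.1 hm.prop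
        obtain ⟨i, hi⟩ := Function.ne_iff.1 hmC.1
        refine ⟨i, ⟨m i, hCA m hmC.2 i, hi⟩, ?_⟩
        intro p hp hpt
        have hpm : p ≤ m := by
          rcases hC.total hp hmC.2 with h | h
          · exact h
          · exact hm.le_of_ge (Finset.mem_erase.2 ⟨hpt, hp⟩) h
        exact (hpm i).trans_lt (lt_of_le_of_ne (hle i _ (hCA m hmC.2 i)) hi)
    obtain ⟨i, ⟨a0, ha0, ha0t⟩, hCi⟩ := hex
    have hne' : ((A i).erase (top i)).Nonempty := ⟨a0, Finset.mem_erase.2 ⟨ha0t, ha0⟩⟩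
    set a' := ((A i).erase (top i)).max' hne' with ha'
    have ha'mem : a' ∈ (A i).erase (top i) := Finset.max'_mem _ _
    set A' := Function.update A i ((A i).erase (top i)) with hA'
    set q := Function.update top i a' with hq
    have hA'i : A' i = (A i).erase (top i) := by simp [hA']
    have hA'j : ∀ j, j ≠ i → A' j = A j := fun j hj => by simp [hA', hj]
    have hsubA : ∀ j, A' j ⊆ A j := by
      intro j
      by_cases hj : j = i
      · subst hj; rw [hA'i]; exact Finset.erase_subset _ _
      · rw [hA'j j hj]
    have hA'mem : ∀ x : Fin K → ℝ, (∀ k, x k ∈ A k) → x i ≠ top i → ∀ k, x k ∈ A' k := by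
      intro x hx hxi k
      by_cases hk : k = i
      · subst hk; rw [hA'i]; exact Finset.mem_erase.2 ⟨hxi, hx k⟩
      · rw [hA'j k hk]; exact hx k
    have hupd : ∀ x : Fin K → ℝ, (∀ k, x k ∈ A k) → ∀ k, Function.update x i a' k ∈ A' k := by
      intro x hx k
      by_cases hk : k = i
      · subst hk; rw [hA'i]; simpa using ha'mem
      · rw [hA'j k hk]; simpa [hk] using hx k
    have hqA' : ∀ k, q k ∈ A' k := hupd top htopA
    have hnotop : ∀ x : Fin K → ℝ, (∀ k, x k ∈ A' k) → x i ≠ top i := by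
      intro x hx
      have := hx i
      rw [hA'i] at this
      exact (Finset.mem_erase.1 this).1
    have hCq : ∀ p ∈ C, p ≠ top → p ≤ q := by
      intro p hp hpt k
      by_cases hk : k = i
      · subst hk
        simp only [hq, Function.update_self]
        exact Finset.le_max' _ _ (Finset.mem_erase.2 ⟨(hCi p hp hpt).ne, hCA p hp k⟩)
      · simp only [hq, Function.update_of_ne hk]
        exact hle k _ (hCA p hp k)
    have hcard : ∑ k, (A' k).card < n := by
      rw [← hn]
      refine Finset.sum_lt_sum (fun k _ => Finset.card_le_card (hsubA k)) ⟨i, Finset.mem_univ _, ?_⟩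
      rw [hA'i]
      exact Finset.card_erase_lt_of_mem (htopA i)
    obtain ⟨φ, hφ1, hφ2, hφ3, p0, hp0, hp0'⟩ := ih _ hcard A' (fun k => ⟨q k, hqA' k⟩) rfl
      (insert q (C.erase top)) (by
        rw [Finset.coe_insert]
        refine IsChain.insert (hC.mono (by simp)) ?_
        intro b hb _
        simp only [Finset.coe_erase, mem_diff, Finset.mem_coe, mem_singleton_iff] at hb
        exact Or.inr (hCq b hb.1 hb.2)) (by
        intro p hp
        rcases Finset.mem_insert.1 hp with rfl | hp
        · exact hqA'
        · have := Finset.mem_erase.1 hp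
          exact hA'mem p (hCA p this.2) (hCi p this.2 this.1).ne)
    set φ' := Function.update φ i (Function.update (φ i) (top i) (φ i a' + (c top - c q))) with hφ'
    have hold : ∀ k (a : ℝ), (k = i → a ≠ top i) → φ' k a = φ k a := by
      intro k a h
      by_cases hk : k = i
      · subst hk; simp [hφ', h rfl]
      · simp [hφ', hk]
    have hs1 : ∀ x : Fin K → ℝ, x i ≠ top i → ∑ k, φ' k (x k) = ∑ k, φ k (x k) := by
      intro x hx
      refine Finset.sum_congr rfl fun k _ => hold k _ ?_
      rintro rfl; exact hx
    have hs2 : ∀ x : Fin K → ℝ, x i = top i → 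
        ∑ k, φ' k (x k) = ∑ k, φ k (Function.update x i a' k) + (c top - c q) := by
      intro x hx
      rw [← Finset.add_sum_erase _ _ (Finset.mem_univ i), 
        ← Finset.add_sum_erase (a := i) _ (fun k => φ k (Function.update x i a' k)) (Finset.mem_univ i)]
      have : ∑ k ∈ Finset.univ.erase i, φ' k (x k) = 
          ∑ k ∈ Finset.univ.erase i, φ k (Function.update x i a' k) := by
        refine Finset.sum_congr rfl fun k hk => ?_
        have hk := (Finset.mem_erase.1 hk).1
        simp [hφ', hk]
      rw [this]
      simp [hφ', hx]
      ring
    have htopeq : ∑ k, φ' k (top k) = c top := by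
      rw [hs2 top rfl]
      have := hφ2 q (Finset.mem_insert_self _ _)
      rw [this]; ring
    refine ⟨φ', ?_, ?_, ?_, p0, fun j => hsubA j (hp0 j), ?_⟩
    · intro x hx
      by_cases hxi : x i = top i
      · rw [hs2 x hxi]
        have e1 : x ⊓ q = Function.update x i a' := by
          ext k
          by_cases hk : k = i
          · subst hk
            simp only [Pi.inf_apply, hq, Function.update_self, hxi]
            exact inf_eq_right.2 (hle k _ (Finset.mem_of_mem_erase ha'mem))
          · simp only [Pi.inf_apply, hq, Function.update_of_ne hk]
            exact inf_eq_left.2 (hle k _ (hx k))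
        have e2 : x ⊔ q = top := by
          ext k
          by_cases hk : k = i
          · subst hk
            simp only [Pi.sup_apply, hq, Function.update_self, hxi]
            exact sup_eq_left.2 (hle k _ (Finset.mem_of_mem_erase ha'mem))
          · simp only [Pi.sup_apply, hq, Function.update_of_ne hk]
            exact sup_eq_right.2 (hle k _ (hx k))
        have h1 := hw x q
        have h2 := hφ1 (Function.update x i a') (hupd x hx)
        rw [e1, e2] at h1
        linarith
      · rw [hs1 x hxi]
        exact hφ1 x (hA'mem x hx hxi)
    · intro p hp
      by_cases hpt : p = top
      · rw [hpt]; exact htopeq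
      · rw [hs1 p (hCi p hp hpt).ne]
        exact hφ2 p (Finset.mem_insert_of_mem (Finset.mem_erase.2 ⟨hpt, hp⟩))
    · intro k a ha
      by_cases hka : k = i ∧ a = top i
      · obtain ⟨rfl, rfl⟩ := hka
        exact ⟨top, htopA, rfl, htopeq⟩
      · have haA' : a ∈ A' k := by
          by_cases hk : k = i
          · subst hk; rw [hA'i]; exact Finset.mem_erase.2 ⟨fun h => hka ⟨rfl, h⟩, ha⟩
          · rw [hA'j k hk]; exact ha
        obtain ⟨x, hx, hxk, hxs⟩ := hφ3 k a haA'
        exact ⟨x, fun j => hsubA j (hx j), hxk, by rw [hs1 x (hnotop x hx)]; exact hxs⟩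
    · intro k
      rw [hold k _ (by rintro rfl; exact hnotop p0 hp0)]
      exact hp0' k

theorem grid_dual_bdd {K : ℕ} [NeZero K] {c : (Fin K → ℝ) → ℝ}
    (hw : ∀ a b : Fin K → ℝ, c (a ⊓ b) + c (a ⊔ b) ≤ c a + c b) 
    (M : ℝ) (hM : ∀ x, |c x| ≤ M)
    (A : Fin K → Finset ℝ) (hA : ∀ k, (A k).Nonempty) 
    (C : Finset (Fin K → ℝ)) (hC : IsChain (· ≤ ·) (C : Set (Fin K → ℝ)))
    (hCA : ∀ p ∈ C, ∀ k, p k ∈ A k) :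
    ∃ φ : Fin K → ℝ → ℝ, (∀ x : Fin K → ℝ, (∀ k, x k ∈ A k) → ∑ k, φ k (x k) ≤ c x) ∧
      (∀ p ∈ C, ∑ k, φ k (p k) = c p) ∧
      (∀ k a, φ k a ∈ Icc (-(M + K * (2 * M))) (M + K * (2 * M))) := by
  classical
  have hM0 : 0 ≤ M := (abs_nonneg _).trans (hM 0)
  have hK : (1 : ℝ) ≤ K := by exact_mod_cast NeZero.one_le
  obtain ⟨φ, h1, h2, h3, p, hp, hpc⟩ := grid_dual hw _ A hA rfl C hC hCA
  have hcp := abs_le.1 (hM p)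
  have hup : ∀ k, ∀ a ∈ A k, φ k a ≤ 2 * M := by
    intro k a ha
    have := h1 (Function.update p k a) (by
      intro j
      by_cases hj : j = k
      · subst hj; simpa using ha
      · simpa [hj] using hp j)
    rw [← Finset.add_sum_erase _ _ (Finset.mem_univ k)] at this
    have e : ∑ j ∈ Finset.univ.erase k, φ j (Function.update p k a j) = c p - c p / K := by
      rw [Finset.sum_congr rfl (g := fun _ => c p / K)]
      · simp [Finset.card_erase_of_mem, Nat.cast_sub (show 1 ≤ K from NeZero.one_le)]
        field_simp
      · intro j hj
        simp [(Finset.mem_erase.1 hj).1, hpc]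
    rw [e] at this
    simp only [Function.update_self] at this
    have hc := (abs_le.1 (hM (Function.update p k a))).2
    have h4 : - M ≤ c p - c p / K := by
      have : c p - c p / K = c p * (1 - 1 / K) := by ring
      rw [this]
      have h5 : (1 : ℝ) / K ≤ 1 := by rw [div_le_one (by linarith)]; exact hK
      have h6 : (0 : ℝ) ≤ 1 / K := by positivity
      nlinarith
    linarith
  have hlo : ∀ k, ∀ a ∈ A k, -(M + K * (2 * M)) ≤ φ k a := by
    intro k a ha
    obtain ⟨x, hx, rfl, hxs⟩ := h3 k a ha
    rw [← Finset.add_sum_erase _ _ (Finset.mem_univ k)] at hxs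
    have : ∑ j ∈ Finset.univ.erase k, φ j (x j) ≤ K * (2 * M) := by
      calc _ ≤ ∑ j ∈ Finset.univ.erase k, (2 * M) := Finset.sum_le_sum fun j _ => hup j _ (hx j)
        _ ≤ ∑ j : Fin K, (2 * M) := Finset.sum_le_sum_of_subset_of_nonneg (Finset.erase_subset _ _)
            fun _ _ _ => by linarith
        _ = _ := by simp
    have hc := (abs_le.1 (hM x)).1
    linarith
  refine ⟨fun k a => if a ∈ A k then φ k a else 0, ?_, ?_, ?_⟩
  · intro x hx
    simp only [hx, if_true]
    exact h1 x hx
  · intro x hx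
    simp only [hCA x hx, if_true]
    exact h2 x hx
  · intro k a
    have : 0 ≤ M + K * (2 * M) := by positivity
    have hh : 2 * M ≤ M + K * (2 * M) := by nlinarith
    simp only
    split_ifs with ha
    · exact ⟨hlo k a ha, (hup k a ha).trans hh⟩
    · exact ⟨by linarith, this⟩

theorem chain_dual {K : ℕ} [NeZero K] {c : (Fin K → ℝ) → ℝ}
    (hw : ∀ a b : Fin K → ℝ, c (a ⊓ b) + c (a ⊔ b) ≤ c a + c b) 
    (M : ℝ) (hM : ∀ x, |c x| ≤ M) (Γ : Set (Fin K → ℝ)) (hΓ : IsChain (· ≤ ·) Γ) :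
    ∃ φ : Fin K → ℝ → ℝ, (∀ x : Fin K → ℝ, ∑ k, φ k (x k) ≤ c x) ∧
      (∀ p ∈ Γ, ∑ k, φ k (p k) = c p) ∧ ∃ B : ℝ, ∀ k a, |φ k a| ≤ B := by
  classical
  set B := M + K * (2 * M) with hB
  have hcomp : IsCompact (Set.pi univ fun _ : Fin K => Set.pi univ fun _ : ℝ => Icc (-B) B) :=
    isCompact_univ_pi fun _ => isCompact_univ_pi fun _ => isCompact_Icc
  have hcont : ∀ x : Fin K → ℝ, Continuous fun φ : Fin K → ℝ → ℝ => ∑ k, φ k (x k) := by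
    intro x; fun_prop
  obtain ⟨φ, hφB, hφ⟩ := hcomp.inter_iInter_nonempty
    (fun x : Fin K → ℝ => {φ : Fin K → ℝ → ℝ | ∑ k, φ k (x k) ≤ c x} ∩ 
      {φ | x ∈ Γ → ∑ k, φ k (x k) = c x}) (by
      intro x
      refine (isClosed_le (hcont x) continuous_const).inter ?_
      by_cases hx : x ∈ Γ
      · simpa [hx] using isClosed_eq (hcont x) continuous_const
      · simp [hx]) (by
      intro u
      obtain ⟨φ, h1, h2, h3⟩ := grid_dual_bdd hw M hM (fun k => insert 0 (u.image fun x => x k))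
        (fun k => Finset.insert_nonempty _ _) (u.filter (· ∈ Γ)) 
        (hΓ.mono (by intro x hx; simpa using (Finset.mem_filter.1 hx).2))
        (by
          intro p hp k
          exact Finset.mem_insert_of_mem (Finset.mem_image_of_mem _ (Finset.mem_filter.1 hp).1))
      refine ⟨φ, fun k _ a _ => h3 k a, ?_⟩
      simp only [mem_iInter]
      intro x hx
      refine ⟨h1 x fun k => Finset.mem_insert_of_mem (Finset.mem_image_of_mem _ hx), ?_⟩
      intro hxΓ
      exact h2 x (Finset.mem_filter.2 ⟨hx, hxΓ⟩))
  simp only [mem_iInter] at hφ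
  refine ⟨φ, fun x => (hφ x).1, fun p hp => (hφ p).2 hp, B, fun k a => abs_le.2 ?_⟩
  exact hφB k (mem_univ _) a (mem_univ _)

theorem chain_dual_meas {K : ℕ} [NeZero K] {c : (Fin K → ℝ) → ℝ} (hc : Continuous c)
    (hw : ∀ a b : Fin K → ℝ, c (a ⊓ b) + c (a ⊔ b) ≤ c a + c b) 
    (M : ℝ) (hM : ∀ x, |c x| ≤ M) (Γ : Set (Fin K → ℝ)) (hΓ : IsChain (· ≤ ·) Γ)
    (s : Finset (Fin K)) :
    ∃ φ : Fin K → ℝ → ℝ, (∀ x : Fin K → ℝ, ∑ k, φ k (x k) ≤ c x) ∧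
      (∀ p ∈ Γ, ∑ k, φ k (p k) = c p) ∧ (∃ B : ℝ, ∀ k a, |φ k a| ≤ B) ∧
      ∀ k ∈ s, Measurable (φ k) := by
  classical
  induction s using Finset.induction_on with
  | empty => 
    obtain ⟨φ, h1, h2, h3⟩ := chain_dual hw M hM Γ hΓ
    exact ⟨φ, h1, h2, h3, by simp⟩
  | insert k s hk ih =>
    obtain ⟨φ, h1, h2, ⟨B, hB⟩, hm⟩ := ih
    have hB0 : 0 ≤ B := (abs_nonneg _).trans (hB k 0)
    set g : (Fin K → ℝ) → ℝ → ℝ := fun y a => 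
      c (Function.update y k a) - ∑ j ∈ Finset.univ.erase k, φ j (y j) with hg
    have hlow : ∀ y a, φ k a ≤ g y a := by
      intro y a
      have := h1 (Function.update y k a)
      rw [← Finset.add_sum_erase _ _ (Finset.mem_univ k)] at this
      have e : ∑ j ∈ Finset.univ.erase k, φ j (Function.update y k a j) = 
          ∑ j ∈ Finset.univ.erase k, φ j (y j) := by
        refine Finset.sum_congr rfl fun j hj => ?_
        simp [(Finset.mem_erase.1 hj).1]
      rw [e, Function.update_self] at this
      simp only [hg]; linarith
    have hbb : ∀ a, BddBelow (range fun y => g y a) := fun a => 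
      ⟨φ k a, by rintro _ ⟨y, rfl⟩; exact hlow y a⟩
    set G : ℝ → ℝ := fun a => ⨅ y, g y a with hG
    have hGlow : ∀ a, φ k a ≤ G a := fun a => le_ciInf fun y => hlow y a
    have hGup : ∀ y a, G a ≤ g y a := fun y a => ciInf_le (hbb a) y
    have hGm : Measurable G := by
      refine UpperSemicontinuous.measurable (upperSemicontinuous_ciInf hbb fun y => ?_)
      refine Continuous.upperSemicontinuous ?_
      simp only [hg]
      fun_prop
    have hsum : ∀ x : Fin K → ℝ, ∑ j, Function.update φ k G j (x j) = 
        G (x k) + ∑ j ∈ Finset.univ.erase k, φ j (x j) := by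
      intro x
      rw [← Finset.add_sum_erase _ _ (Finset.mem_univ k), Function.update_self]
      congr 1
      refine Finset.sum_congr rfl fun j hj => ?_
      simp [(Finset.mem_erase.1 hj).1]
    have hfeas : ∀ x : Fin K → ℝ, ∑ j, Function.update φ k G j (x j) ≤ c x := by
      intro x
      rw [hsum]
      have := hGup x (x k)
      simp only [hg, Function.update_eq_self] at this
      linarith
    refine ⟨Function.update φ k G, hfeas, ?_, ⟨M + K * B + B, ?_⟩, ?_⟩
    · intro p hp
      refine le_antisymm (hfeas p) ?_
      rw [hsum, ← h2 p hp, ← Finset.add_sum_erase _ _ (Finset.mem_univ k)]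
      linarith [hGlow (p k)]
    · have hM0 : 0 ≤ M := (abs_nonneg _).trans (hM 0)
      have hKB : 0 ≤ K * B := by positivity
      intro j a
      by_cases hj : j = k
      · subst hj
        rw [Function.update_self, abs_le]
        constructor
        · linarith [hGlow a, (abs_le.1 (hB j a)).1]
        · have h5 := hGup 0 a
          simp only [hg] at h5
          have h6 := (abs_le.1 (hM (Function.update 0 j a))).2
          have h7 : -(K * B) ≤ ∑ i ∈ Finset.univ.erase j, φ i ((0 : Fin K → ℝ) i) := by
            rw [neg_le, ← Finset.sum_neg_distrib]
            calc _ ≤ ∑ i ∈ Finset.univ.erase j, B := 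
                  Finset.sum_le_sum fun i _ => by linarith [(abs_le.1 (hB i ((0 : Fin K → ℝ) i))).1]
              _ ≤ ∑ j : Fin K, B := Finset.sum_le_sum_of_subset_of_nonneg (Finset.erase_subset _ _)
                  fun _ _ _ => hB0
              _ = _ := by simp
          linarith
      · rw [Function.update_of_ne hj]
        linarith [hB j a]
    · intro j hj
      by_cases hjk : j = k
      · subst hjk; rw [Function.update_self]; exact hGm
      · rw [Function.update_of_ne hjk]
        exact hm j ((Finset.mem_insert.1 hj).resolve_left hjk)

theorem cdf_level (μ : Measure ℝ) [IsProbabilityMeasure μ] (hat : ∀ x, μ {x} = 0)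
    (u : ℝ) (hu0 : 0 ≤ u) (hu1 : u ≤ 1) :
    μ.real {x | ProbabilityTheory.cdf μ x ≤ u} = u := by
  set F := ProbabilityTheory.cdf μ with hF
  have hcont : Continuous F := by
    rw [continuous_iff_continuousAt]
    intro x
    have h1 := F.measure_singleton x
    rw [hF, ProbabilityTheory.measure_cdf, hat, ← hF, eq_comm, ENNReal.ofReal_eq_zero] at h1
    rw [F.mono.continuousAt_iff_leftLim_eq_rightLim, F.rightLim_eq]
    have := F.mono.leftLim_le (le_refl x)
    linarith
  have hmono : Monotone F := F.mono
  have hF1 : ∀ x, F x ≤ 1 := ProbabilityTheory.cdf_le_one μ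
  refine le_antisymm ?_ ?_
  · rcases hu1.eq_or_lt with rfl | hu1
    · exact measureReal_le_one
    rcases Set.eq_empty_or_nonempty {x | F x ≤ u} with he | hne
    · rw [he]; simpa using hu0
    · have hbdd : BddAbove {x | F x ≤ u} := by
        obtain ⟨y, hy⟩ := ((ProbabilityTheory.tendsto_cdf_atTop μ).eventually (lt_mem_nhds hu1)).exists
        refine ⟨y, fun x hx => ?_⟩
        by_contra hxy
        push Not at hxy
        have := hmono hxy.le
        have hx : F x ≤ u := hx
        linarith
      have hcl : IsClosed {x | F x ≤ u} := isClosed_le hcont continuous_const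
      have hs : F (sSup {x | F x ≤ u}) ≤ u := hcl.csSup_mem hne hbdd
      calc μ.real {x | F x ≤ u} ≤ μ.real (Iic (sSup {x | F x ≤ u})) :=
            measureReal_mono (fun x hx => le_csSup hbdd hx)
        _ = F (sSup {x | F x ≤ u}) := (ProbabilityTheory.cdf_eq_real μ _).symm
        _ ≤ u := hs
  · rcases hu1.eq_or_lt with rfl | hu1
    · have : {x | F x ≤ 1} = univ := by ext x; simp [hF1 x]
      rw [this]; simp
    rcases hu0.eq_or_lt with rfl | hu0
    · exact measureReal_nonneg
    · have h1 := ((ProbabilityTheory.tendsto_cdf_atTop μ).eventually (lt_mem_nhds hu1)).exists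
      have h2 := ((ProbabilityTheory.tendsto_cdf_atBot μ).eventually (gt_mem_nhds hu0)).exists
      obtain ⟨y, hy⟩ := h1
      obtain ⟨z, hz⟩ := h2
      obtain ⟨x, hx⟩ := mem_range_of_exists_le_of_exists_ge hcont ⟨z, hz.le⟩ ⟨y, hy.le⟩
      calc u = μ.real (Iic x) := by rw [← hx, hF, ProbabilityTheory.cdf_eq_real]
        _ ≤ _ := measureReal_mono fun w hw => by
          have := hmono hw
          show F w ≤ u
          linarith

theorem exists_monotone_map (μ ν : Measure ℝ) [IsProbabilityMeasure μ] [IsProbabilityMeasure ν]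
    (hat : ∀ x, μ {x} = 0) (a b : ℝ) (hν : ν (Icc a b)ᶜ = 0) :
    ∃ T : ℝ → ℝ, Monotone T ∧ μ.map T = ν := by
  set F := ProbabilityTheory.cdf μ with hF
  set H := ProbabilityTheory.cdf ν with hH
  have hF1 : ∀ x, F x ≤ 1 := ProbabilityTheory.cdf_le_one μ
  have hHa : ∀ y < a, H y = 0 := by
    intro y hy
    rw [hH, ProbabilityTheory.cdf_eq_real, measureReal_eq_zero_iff]
    refine measure_mono_null (fun x hx => ?_) hν
    simp only [mem_Iic] at hx
    simp only [mem_compl_iff, mem_Icc, not_and_or, not_le]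
    left; linarith
  have hHb : ∀ y, b ≤ y → H y = 1 := by
    intro y hy
    have h0 : ν (Iic y)ᶜ = 0 := by
      refine measure_mono_null (fun x hx => ?_) hν
      simp only [mem_compl_iff, mem_Iic, not_le] at hx
      simp only [mem_compl_iff, mem_Icc, not_and_or, not_le]
      right; linarith
    rw [hH, ProbabilityTheory.cdf_eq_real, measureReal_def, (prob_compl_eq_zero_iff measurableSet_Iic).1 h0]
    simp
  have hab : a ≤ b := by
    by_contra h
    push Not at h
    have h1 := hHa b h
    rw [hHb b le_rfl] at h1
    exact one_ne_zero h1
  set S : ℝ → Set ℝ := fun x => {y | y ∈ Icc a b ∧ F x ≤ H y} with hS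
  have hbS : ∀ x, b ∈ S x := fun x => ⟨⟨hab, le_rfl⟩, by rw [hHb b le_rfl]; exact hF1 x⟩
  have hbdd : ∀ x, BddBelow (S x) := fun x => ⟨a, fun y hy => hy.1.1⟩
  set T : ℝ → ℝ := fun x => sInf (S x) with hT
  have hTa : ∀ x, a ≤ T x := fun x => le_csInf ⟨b, hbS x⟩ fun y hy => hy.1.1
  have hTb : ∀ x, T x ≤ b := fun x => csInf_le (hbdd x) (hbS x)
  have hmono : Monotone T := fun x x' hxx => csInf_le_csInf (hbdd x) ⟨b, hbS x'⟩ 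
    fun y hy => ⟨hy.1, (F.mono hxx).trans hy.2⟩
  have hFT : ∀ x, F x ≤ H (T x) := by
    intro x
    have hr : ContinuousWithinAt H (Ici (T x)) (T x) := H.right_continuous _
    have hr' : Filter.Tendsto H (nhdsWithin (T x) (Ioi (T x))) (nhds (H (T x))) :=
      hr.mono_left (nhdsWithin_mono _ Ioi_subset_Ici_self)
    refine ge_of_tendsto hr' ?_
    filter_upwards [self_mem_nhdsWithin] with y hy
    obtain ⟨z, hz, hzy⟩ := exists_lt_of_csInf_lt ⟨b, hbS x⟩ hy
    exact hz.2.trans (H.mono hzy.le)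
  refine ⟨T, hmono, ?_⟩
  have := Measure.isProbabilityMeasure_map (μ := μ) hmono.measurable.aemeasurable
  refine Measure.eq_of_cdf _ _ ?_
  ext y
  rw [ProbabilityTheory.cdf_eq_real, map_measureReal_apply hmono.measurable measurableSet_Iic]
  rw [← hH]
  rcases lt_or_ge y a with hya | hya
  · rw [hHa y hya]
    have : T ⁻¹' Iic y = ∅ := by
      ext x
      simp only [mem_preimage, mem_Iic, mem_empty_iff_false, iff_false, not_le]
      exact hya.trans_le (hTa x)
    rw [this]; simp
  rcases le_or_gt b y with hyb | hyb
  · rw [hHb y hyb]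
    have : T ⁻¹' Iic y = univ := by
      ext x
      simpa using (hTb x).trans hyb
    rw [this]; simp
  · have : T ⁻¹' Iic y = {x | F x ≤ H y} := by
      ext x
      simp only [mem_preimage, mem_Iic, mem_setOf_eq]
      constructor
      · intro h; exact (hFT x).trans (H.mono h)
      · intro h; exact csInf_le (hbdd x) ⟨⟨hya, hyb.le⟩, h⟩
    rw [this]
    exact cdf_level μ hat _ (ProbabilityTheory.cdf_nonneg ν y) (ProbabilityTheory.cdf_le_one ν y)

/-- Multi-marginal optimal transport with a continuous, bounded, strictly submodular cost on
`ℝ`: the Kantorovich problem, its dual, and the Monge problem all have solutions with equal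
values, and the Monge problem has a `μ₁`-a.s. unique solution consisting of non-decreasing
maps. -/
theorem multi_marginal_submodular
    {K : ℕ} [NeZero K]
    (μ : Fin K → Measure ℝ) [∀ k, IsProbabilityMeasure (μ k)]
    (Xs : Fin K → Set ℝ) (hXs : ∀ k, IsCompact (Xs k))
    (hsupp : ∀ k, μ k (Xs k)ᶜ = 0)
    (hac : ∀ k, μ k ≪ volume)
    (c : (Fin K → ℝ) → ℝ) (hc : Continuous c)
    (hbdd : ∃ M : ℝ, ∀ x, |c x| ≤ M)
    (hsub : StrictlySubmodular c) :
    ∃ v : ℝ,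
      (∃ π : Measure (Fin K → ℝ), IsMCoupling π μ ∧ ∫ x, c x ∂π = v)
      ∧ v = sInf {r : ℝ | ∃ π : Measure (Fin K → ℝ), IsMCoupling π μ ∧ r = ∫ x, c x ∂π}
      ∧ (∃ φ : Fin K → ℝ → ℝ,
          (∀ k, Integrable (φ k) (μ k)) ∧
          (∀ x : Fin K → ℝ, ∑ k, φ k (x k) ≤ c x) ∧
          ∑ k, ∫ x, φ k x ∂(μ k) = v)
      ∧ v = sSup {r : ℝ | ∃ φ : Fin K → ℝ → ℝ,
            (∀ k, Integrable (φ k) (μ k)) ∧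
            (∀ x : Fin K → ℝ, ∑ k, φ k (x k) ≤ c x) ∧
            r = ∑ k, ∫ x, φ k x ∂(μ k)}
      ∧ (∃ T : Fin K → ℝ → ℝ, MongeFeasible μ T ∧
          (∀ k, Monotone (T k)) ∧
          ∫ x, c (fun k => T k x) ∂(μ 0) = v ∧
          (∀ T' : Fin K → ℝ → ℝ, MongeFeasible μ T' →
            ∫ x, c (fun k => T' k x) ∂(μ 0) = v →
            ∀ k, T' k =ᵐ[μ 0] T k))
      ∧ v = sInf {r : ℝ | ∃ T : Fin K → ℝ → ℝ, MongeFeasible μ T ∧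
            r = ∫ x, c (fun k => T k x) ∂(μ 0)} := by
  classical
  obtain ⟨M, hM⟩ := hbdd
  have hat : ∀ x, μ 0 {x} = 0 := fun x => hac 0 (by simp)
  -- the monotone maps
  have hT : ∀ k, ∃ T : ℝ → ℝ, Monotone T ∧ (μ 0).map T = μ k ∧ (k = 0 → T = id) := by
    intro k
    by_cases hk : k = 0
    · subst hk
      exact ⟨id, monotone_id, Measure.map_id, fun _ => rfl⟩
    · obtain ⟨a, ha⟩ := (hXs k).bddBelow
      obtain ⟨b, hb⟩ := (hXs k).bddAbove
      obtain ⟨T, h1, h2⟩ := exists_monotone_map (μ 0) (μ k) hat a b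
        (measure_mono_null (compl_subset_compl.2 fun x hx => ⟨ha hx, hb hx⟩) (hsupp k))
      exact ⟨T, h1, h2, fun h => absurd h hk⟩
  choose T hTmono hTmap hT0 using hT
  have hTfeas : MongeFeasible μ T := ⟨hT0 0 rfl, fun k => ⟨(hTmono k).measurable, hTmap k⟩⟩
  set Γ : Set (Fin K → ℝ) := range fun x k => T k x with hΓ
  have hΓchain : IsChain (· ≤ ·) Γ := by
    rintro _ ⟨x, rfl⟩ _ ⟨y, rfl⟩ _
    rcases le_total x y with h | h
    · exact Or.inl fun k => hTmono k h
    · exact Or.inr fun k => hTmono k h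
  obtain ⟨φ, hφc, hφΓ, ⟨B, hB⟩, hφm⟩ := chain_dual_meas hc (weak_lattice hsub) M hM Γ hΓchain
    Finset.univ
  have hφm' : ∀ k, Measurable (φ k) := fun k => hφm k (Finset.mem_univ k)
  have hφi : ∀ k, Integrable (φ k) (μ k) := fun k =>
    Integrable.of_bound (hφm' k).aestronglyMeasurable B (Filter.Eventually.of_forall fun x => hB k x)
  -- couplings
  have hprob : ∀ π : Measure (Fin K → ℝ), IsMCoupling π μ → IsProbabilityMeasure π := by
    intro π hπ
    have h0 := hπ 0
    have : IsProbabilityMeasure (π.map fun f => f 0) := by rw [h0]; infer_instance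
    exact Measure.isProbabilityMeasure_of_map (fun f : Fin K → ℝ => f 0)
  have hci : ∀ π : Measure (Fin K → ℝ), IsMCoupling π μ → Integrable c π := by
    intro π hπ
    have := hprob π hπ
    exact Integrable.of_bound hc.measurable.aestronglyMeasurable M (Filter.Eventually.of_forall hM)
  have hsumi : ∀ π : Measure (Fin K → ℝ), IsMCoupling π μ → ∀ ψ : Fin K → ℝ → ℝ,
      (∀ k, Integrable (ψ k) (μ k)) → Integrable (fun x => ∑ k, ψ k (x k)) π ∧ 
      ∫ x, ∑ k, ψ k (x k) ∂π = ∑ k, ∫ x, ψ k x ∂(μ k) := by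
    intro π hπ ψ hψ
    have hi : ∀ k, Integrable (fun x : Fin K → ℝ => ψ k (x k)) π := by
      intro k
      have h := hψ k
      rw [← hπ k] at h
      exact h.comp_measurable (measurable_pi_apply k)
    refine ⟨integrable_finsetSum _ fun k _ => hi k, ?_⟩
    rw [integral_finsetSum _ fun k _ => hi k]
    refine Finset.sum_congr rfl fun k _ => ?_
    have h := (hψ k).aestronglyMeasurable
    rw [← hπ k] at h ⊢
    rw [integral_map (measurable_pi_apply k).aemeasurable h]
  have hdual : ∀ π : Measure (Fin K → ℝ), IsMCoupling π μ → ∀ ψ : Fin K → ℝ → ℝ,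
      (∀ k, Integrable (ψ k) (μ k)) → (∀ x : Fin K → ℝ, ∑ k, ψ k (x k) ≤ c x) → 
      ∑ k, ∫ x, ψ k x ∂(μ k) ≤ ∫ x, c x ∂π := by
    intro π hπ ψ hψ hψc
    obtain ⟨h1, h2⟩ := hsumi π hπ ψ hψ
    rw [← h2]
    exact integral_mono h1 (hci π hπ) hψc
  -- Monge maps induce couplings
  have hmeas : ∀ S : Fin K → ℝ → ℝ, MongeFeasible μ S → Measurable fun x k => S k x := 
    fun S hS => measurable_pi_lambda _ fun k => (hS.2 k).1
  have hmc : ∀ S : Fin K → ℝ → ℝ, MongeFeasible μ S → 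
      IsMCoupling ((μ 0).map fun x k => S k x) μ := by
    intro S hS k
    rw [Measure.map_map (measurable_pi_apply k) (hmeas S hS)]
    exact (hS.2 k).2
  have hmint : ∀ S : Fin K → ℝ → ℝ, MongeFeasible μ S → 
      ∫ x, c x ∂((μ 0).map fun x k => S k x) = ∫ x, c (fun k => S k x) ∂(μ 0) := by
    intro S hS
    rw [integral_map (hmeas S hS).aemeasurable hc.measurable.aestronglyMeasurable]
  set π₀ := (μ 0).map fun x k => T k x with hπ₀
  have hπ₀c : IsMCoupling π₀ μ := hmc T hTfeas
  set v := ∫ x, c (fun k => T k x) ∂(μ 0) with hv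
  have hπ₀v : ∫ x, c x ∂π₀ = v := hmint T hTfeas
  have hφv : ∑ k, ∫ x, φ k x ∂(μ k) = v := by
    rw [← (hsumi π₀ hπ₀c φ hφi).2, hπ₀, integral_map (hmeas T hTfeas).aemeasurable, hv]
    · exact integral_congr_ae (Filter.Eventually.of_forall fun x => hφΓ _ ⟨x, rfl⟩)
    · exact (hsumi π₀ hπ₀c φ hφi).1.aestronglyMeasurable
  refine ⟨v, ⟨π₀, hπ₀c, hπ₀v⟩, ?_, ⟨φ, hφi, hφc, hφv⟩, ?_, ⟨T, hTfeas, hTmono, rfl, ?_⟩, ?_⟩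
  · symm
    apply IsLeast.csInf_eq
    refine ⟨⟨π₀, hπ₀c, hπ₀v.symm⟩, ?_⟩
    rintro r ⟨π, hπ, rfl⟩
    rw [← hφv]
    exact hdual π hπ φ hφi hφc
  · symm
    apply IsGreatest.csSup_eq
    refine ⟨⟨φ, hφi, hφc, hφv.symm⟩, ?_⟩
    rintro r ⟨ψ, hψi, hψc, rfl⟩
    rw [← hπ₀v]
    exact hdual π₀ hπ₀c ψ hψi hψc
  · intro T' hT' hT'v
    set Z : Set (Fin K → ℝ) := {x | ∑ k, φ k (x k) = c x} with hZ
    have hZchain : ∀ x ∈ Z, ∀ y ∈ Z, x ≤ y ∨ y ≤ x := by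
      intro x hx y hy
      by_contra hcon
      push Not at hcon
      have h1 := strict_lattice hsub x y hcon.1 hcon.2
      have h2 := hφc (x ⊓ y)
      have h3 := hφc (x ⊔ y)
      have hx' : ∑ k, φ k (x k) = c x := hx
      have hy' : ∑ k, φ k (y k) = c y := hy
      have h4 : ∑ k, φ k ((x ⊓ y) k) + ∑ k, φ k ((x ⊔ y) k) = 
          ∑ k, φ k (x k) + ∑ k, φ k (y k) := by
        rw [← Finset.sum_add_distrib, ← Finset.sum_add_distrib]
        refine Finset.sum_congr rfl fun k _ => ?_
        simp only [Pi.inf_apply, Pi.sup_apply]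
        rcases le_total (x k) (y k) with h | h
        · rw [inf_eq_left.2 h, sup_eq_right.2 h]
        · rw [inf_eq_right.2 h, sup_eq_left.2 h, add_comm]
      linarith
    set π' := (μ 0).map fun x k => T' k x with hπ'
    have hπ'c : IsMCoupling π' μ := hmc T' hT'
    have hae : ∀ᵐ x ∂(μ 0), (fun k => T' k x) ∈ Z := by
      obtain ⟨h1, h2⟩ := hsumi π' hπ'c φ hφi
      have h3 : (fun x : Fin K → ℝ => ∑ k, φ k (x k)) =ᵐ[π'] c := by
        refine (integral_eq_iff_of_ae_le h1 (hci π' hπ'c) (Filter.Eventually.of_forall hφc)).1 ?_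
        rw [h2, hφv, hπ', hmint T' hT', hT'v]
      exact ae_of_ae_map (hmeas T' hT').aemeasurable h3
    have hTZ : ∀ x, (fun k => T k x) ∈ Z := fun x => hφΓ _ ⟨x, rfl⟩
    intro k
    have hcts : ∀ᵐ x ∂(μ 0), ContinuousAt (T k) x := by
      have hcount := (hTmono k).countable_not_continuousAt
      exact hac 0 (hcount.measure_zero volume)
    have hT0' : T 0 = id := hTfeas.1
    have hT'0 : T' 0 = id := hT'.1
    filter_upwards [hae, hcts] with x hx hxc
    have hup : ∀ y, x < y → T' k x ≤ T k y := by
      intro y hy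
      rcases hZchain _ hx _ (hTZ y) with h | h
      · exact h k
      · have := h 0
        simp only [hT0', hT'0, id] at this
        exact absurd hy (not_lt.2 this)
    have hdn : ∀ y, y < x → T k y ≤ T' k x := by
      intro y hy
      rcases hZchain _ hx _ (hTZ y) with h | h
      · have := h 0
        simp only [hT0', hT'0, id] at this
        exact absurd hy (not_lt.2 this)
      · exact h k
    refine le_antisymm ?_ ?_
    · refine ge_of_tendsto (hxc.tendsto.mono_left (nhdsWithin_le_nhds (s := Ioi x))) ?_
      filter_upwards [self_mem_nhdsWithin] with y hy
      exact hup y hy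
    · refine le_of_tendsto (hxc.tendsto.mono_left (nhdsWithin_le_nhds (s := Iio x))) ?_
      filter_upwards [self_mem_nhdsWithin] with y hy
      exact hdn y hy
  · symm
    apply IsLeast.csInf_eq
    refine ⟨⟨T, hTfeas, rfl⟩, ?_⟩
    rintro r ⟨S, hS, rfl⟩
    rw [← hφv, ← hmint S hS]
    exact hdual _ (hmc S hS) φ hφi hφc
end

section
/- (Cambanis–Simons–Stout / scalar optimal transport) Let μ and ν be Borel probability measures on ℝ and let c : ℝ² → ℝ be a submodular cost satisfying the standing assumption. Then the optimal transport cost has the closed form inf_{π ∈ M(μ,ν)} ∫ c(x,y) dπ(x,y) = ∫₀¹ c(Q_μ(t), Q_ν(t)) dt, where Q_μ and Q_ν are the quantile functions of μ and ν. -/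
open MeasureTheory Set

/-- `c : ℝ² → ℝ` is submodular: `x' ≤ x` and `y' ≤ y` imply
`c(x,y) + c(x',y') ≤ c(x,y') + c(x',y)`. -/
def Submodular (c : ℝ × ℝ → ℝ) : Prop :=
  ∀ x x' y y' : ℝ, x' ≤ x → y' ≤ y →
    c (x, y) + c (x', y') ≤ c (x, y') + c (x', y)

/-- The quantile function `Q_μ(t) = inf { x : F_μ(x) ≥ t }` of a measure on `ℝ`. -/
noncomputable def quantile (μ : Measure ℝ) (t : ℝ) : ℝ :=
  sInf {x : ℝ | t ≤ (μ (Iic x)).toReal}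


open Filter Topology ProbabilityTheory

lemma quantile_le_iff (μ : Measure ℝ) [IsProbabilityMeasure μ] {t : ℝ} (ht : t ∈ Ioo (0:ℝ) 1)
    (x : ℝ) : quantile μ t ≤ x ↔ t ≤ (μ (Iic x)).toReal := by
  have hF : ∀ x, (μ (Iic x)).toReal = cdf μ x := fun x => (cdf_eq_real μ x).symm
  unfold quantile
  simp only [hF]
  have hne : {x : ℝ | t ≤ cdf μ x}.Nonempty := by
    obtain ⟨y, hy⟩ := ((tendsto_cdf_atTop μ).eventually (lt_mem_nhds ht.2)).exists
    exact ⟨y, hy.le⟩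
  have hbdd : BddBelow {x : ℝ | t ≤ cdf μ x} := by
    obtain ⟨y, hy⟩ := ((tendsto_cdf_atBot μ).eventually (gt_mem_nhds ht.1)).exists
    refine ⟨y, fun z hz => ?_⟩
    by_contra h
    push Not at h
    exact absurd (lt_of_le_of_lt ((show t ≤ cdf μ z from hz).trans (monotone_cdf μ h.le)) hy)
      (lt_irrefl _)
  constructor
  · intro h
    refine le_trans ?_ (monotone_cdf μ h)
    set s := sInf {x : ℝ | t ≤ cdf μ x}
    have hc : Tendsto (cdf μ) (𝓝[>] s) (𝓝 (cdf μ s)) :=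
      ((cdf μ).right_continuous s).mono Ioi_subset_Ici_self
    refine ge_of_tendsto hc ?_
    filter_upwards [self_mem_nhdsWithin] with y hy
    obtain ⟨z, hz, hzy⟩ := (csInf_lt_iff hbdd hne).1 hy
    exact (show t ≤ cdf μ z from hz).trans (monotone_cdf μ hzy.le)
  · intro h
    exact csInf_le hbdd h

lemma quantile_monotoneOn (μ : Measure ℝ) [IsProbabilityMeasure μ] :
    MonotoneOn (quantile μ) (Ioo (0:ℝ) 1) := by
  intro s hs t ht hst
  rw [quantile_le_iff μ hs]
  exact hst.trans ((quantile_le_iff μ ht _).1 le_rfl)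

lemma quantile_aemeasurable (μ : Measure ℝ) [IsProbabilityMeasure μ] :
    AEMeasurable (quantile μ) (volume.restrict (Ioo (0:ℝ) 1)) :=
  aemeasurable_restrict_of_monotoneOn measurableSet_Ioo (quantile_monotoneOn μ)

lemma quantile_map (μ : Measure ℝ) [IsProbabilityMeasure μ] :
    (volume.restrict (Ioo (0:ℝ) 1)).map (quantile μ) = μ := by
  symm
  refine Measure.ext_of_Iic _ _ fun a => ?_
  rw [Measure.map_apply_of_aemeasurable (quantile_aemeasurable μ) measurableSet_Iic]
  have h1 : quantile μ ⁻¹' Iic a =ᵐ[volume.restrict (Ioo (0:ℝ) 1)]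
      Iic ((μ (Iic a)).toReal) := by
    rw [Filter.eventuallyEq_set]
    filter_upwards [ae_restrict_mem measurableSet_Ioo] with t ht
    exact quantile_le_iff μ ht a
  rw [measure_congr h1, Measure.restrict_apply measurableSet_Iic]
  have hle : (μ (Iic a)).toReal ≤ 1 := measureReal_le_one
  have h2 : (Iic ((μ (Iic a)).toReal) ∩ Ioo (0:ℝ) 1 : Set ℝ) =ᵐ[volume]
      Ioc 0 ((μ (Iic a)).toReal) := by
    have : ∀ᵐ x : ℝ, x ≠ 1 := by simp [ae_iff]
    rw [Filter.eventuallyEq_set]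
    filter_upwards [this] with x hx
    constructor
    · rintro ⟨h, h', -⟩
      exact ⟨h', h⟩
    · rintro ⟨h, h'⟩
      exact ⟨h', h, lt_of_le_of_ne (h'.trans hle) hx⟩
  rw [measure_congr h2, Real.volume_Ioc, sub_zero, ENNReal.ofReal_toReal (measure_ne_top _ _)]

/-- Order statistics of the first `n` terms of a sequence. -/
noncomputable def ordStat (x : ℕ → ℝ) (n i : ℕ) : ℝ :=
  if h : i < n then x (Tuple.sort (fun j : Fin n => x j) ⟨i, h⟩) else 0

lemma ordStat_le_iff (x : ℕ → ℝ) {n i : ℕ} (h : i < n) (q : ℝ) :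
    ordStat x n i ≤ q ↔ (i : ℝ) < ∑ j ∈ Finset.range n, (Iic q).indicator (fun _ => (1:ℝ)) (x j) := by
  have hm := Tuple.monotone_sort (fun j : Fin n => x j)
  have h1 := Tuple.lt_card_le_iff_apply_le_of_monotone (j := ⟨i, h⟩) (a := q) hm
  have h2 : ordStat x n i = ((fun j : Fin n => x j) ∘ Tuple.sort (fun j : Fin n => x j)) ⟨i, h⟩ := by
    simp [ordStat, h]
  rw [h2, ← h1]
  have h3 : ∑ j ∈ Finset.range n, (Iic q).indicator (fun _ => (1:ℝ)) (x j)
      = ∑ j : Fin n, (Iic q).indicator (fun _ => (1:ℝ))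
          (((fun j : Fin n => x j) ∘ Tuple.sort (fun j : Fin n => x j)) j) := by
    rw [Finset.sum_range]
    exact (Equiv.sum_comp (Tuple.sort (fun j : Fin n => x j))
      (fun j : Fin n => (Iic q).indicator (fun _ => (1:ℝ)) (x j))).symm
  rw [h3]
  simp only [Set.indicator_apply, mem_Iic, Finset.sum_boole, Nat.cast_lt]

lemma ordStat_tendsto (μ : Measure ℝ) [IsProbabilityMeasure μ] (x : ℕ → ℝ)
    (hx : ∀ q : ℚ, Tendsto (fun n : ℕ =>
      (∑ j ∈ Finset.range n, (Iic (q:ℝ)).indicator (fun _ => (1:ℝ)) (x j)) / n) atTop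
      (𝓝 (μ (Iic (q:ℝ))).toReal))
    {t : ℝ} (ht : t ∈ Ioo (0:ℝ) 1) (htq : ∀ q : ℚ, (μ (Iic (q:ℝ))).toReal ≠ t) :
    Tendsto (fun n : ℕ => ordStat x n ⌊t * n⌋₊) atTop (𝓝 (quantile μ t)) := by
  have hlt : ∀ n : ℕ, 0 < n → ⌊t * n⌋₊ < n := by
    intro n hn
    have hn' : (0:ℝ) < n := by exact_mod_cast hn
    rw [Nat.floor_lt (by nlinarith [ht.1])]
    nlinarith [ht.2]
  rw [tendsto_order]
  constructor
  · intro r hr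
    obtain ⟨q, hq1, hq2⟩ := exists_rat_btwn hr
    have h1 : (μ (Iic (q:ℝ))).toReal < t := by
      rw [← not_le, ← quantile_le_iff μ ht]; exact not_le.2 hq2
    have h2 : Tendsto (fun n : ℕ => t - 1 / (n:ℝ)) atTop (𝓝 t) := by
      simpa using tendsto_one_div_atTop_nhds_zero_nat.const_sub t
    filter_upwards [(hx q).eventually_lt h2 h1, eventually_gt_atTop 0] with n hn hn0
    have hn' : (0:ℝ) < n := by exact_mod_cast hn0
    refine hq1.trans ?_
    rw [← not_le, ordStat_le_iff x (hlt n hn0), not_lt]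
    rw [div_lt_iff₀ hn'] at hn
    have : (t - 1 / (n:ℝ)) * n = t * n - 1 := by field_simp
    have h3 := Nat.lt_floor_add_one (t * n)
    linarith
  · intro r hr
    obtain ⟨q, hq1, hq2⟩ := exists_rat_btwn hr
    have h1 : t < (μ (Iic (q:ℝ))).toReal :=
      lt_of_le_of_ne ((quantile_le_iff μ ht _).1 hq1.le) (htq q).symm
    filter_upwards [(hx q).eventually (lt_mem_nhds h1), eventually_gt_atTop 0] with n hn hn0
    have hn' : (0:ℝ) < n := by exact_mod_cast hn0
    refine lt_of_le_of_lt ?_ hq2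
    rw [ordStat_le_iff x (hlt n hn0)]
    rw [lt_div_iff₀ hn'] at hn
    exact lt_of_le_of_lt (Nat.floor_le (by nlinarith [ht.1])) hn

lemma Submodular.sum_le {c : ℝ × ℝ → ℝ} (hc : Submodular c) {n : ℕ} {u v : Fin n → ℝ}
    (hu : Monotone u) (hv : Monotone v) (s : Finset (Fin n)) :
    ∀ (σ : Equiv.Perm (Fin n)), (∀ x, σ x ≠ x → x ∈ s) →
    ∑ i ∈ s, c (u i, v i) ≤ ∑ i ∈ s, c (u i, v (σ i)) := by
  classical
  induction s using Finset.induction_on_max with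
  | empty => simp
  | insert a s hamax hind =>
    intro σ hσ
    have has : a ∉ s := fun h => lt_irrefl _ (hamax a h)
    rw [Finset.sum_insert has, Finset.sum_insert has]
    by_cases hσa : σ a = a
    · rw [hσa]
      have := hind σ (fun x hx => by
        rcases Finset.mem_insert.1 (hσ x hx) with rfl | h
        · exact absurd hσa hx
        · exact h)
      linarith
    set τ : Equiv.Perm (Fin n) := σ.trans (Equiv.swap a (σ a)) with hτ
    have hτs := hind τ (by
      intro x hx
      have hxa : x ≠ a := by
        rintro rfl
        simp [τ] at hx
      by_cases h : σ x = x
      · by_cases h' : x = σ a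
        · exact absurd (σ.injective (h.trans h')) hxa
        · exfalso; apply hx
          simp only [τ, Equiv.trans_apply, h]
          exact Equiv.swap_apply_of_ne_of_ne hxa h'
      · exact Finset.mem_of_mem_insert_of_ne (hσ x h) hxa)
    set b := σ.symm a with hb
    have hσb : σ b = a := by simp [b]
    have hba : b ≠ a := by
      intro h; rw [h] at hσb; exact hσa hσb
    have hbs : b ∈ s :=
      Finset.mem_of_mem_insert_of_ne (hσ b (by rw [hσb]; exact hba.symm)) hba
    have hsa : σ a ∈ s :=
      Finset.mem_of_mem_insert_of_ne (hσ _ (fun h => hσa (σ.injective h))) hσa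
    rw [← Finset.sum_erase_add _ _ hbs] at hτs
    conv_rhs at hτs => rw [← Finset.sum_erase_add _ _ hbs]
    rw [Finset.sum_erase_add _ _ hbs] at hτs
    rw [← Finset.sum_erase_add s (fun i => c (u i, v (σ i))) hbs]
    have e1 : ∑ i ∈ s.erase b, c (u i, v (τ i)) = ∑ i ∈ s.erase b, c (u i, v (σ i)) := by
      refine Finset.sum_congr rfl fun x hx => ?_
      rw [Finset.mem_erase] at hx
      have h1 : σ x ≠ a := fun h => hx.1 (σ.injective (h.trans hσb.symm))
      have h2 : σ x ≠ σ a := fun h => has (σ.injective h ▸ hx.2)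
      simp only [τ, Equiv.trans_apply, Equiv.swap_apply_of_ne_of_ne h1 h2]
    have e2 : τ b = σ a := by simp [τ, hσb]
    rw [e1, e2] at hτs
    have := hc (u a) (u b) (v a) (v (σ a)) (hu (hamax b hbs).le) (hv (hamax _ hsa).le)
    rw [hσb]
    linarith

lemma ordStat_sum_le {c : ℝ × ℝ → ℝ} (hc : Submodular c) (x y : ℕ → ℝ) (n : ℕ) :
    ∑ i ∈ Finset.range n, c (ordStat x n i, ordStat y n i)
      ≤ ∑ i ∈ Finset.range n, c (x i, y i) := by
  rw [Finset.sum_range, Finset.sum_range]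
  set σ := Tuple.sort (fun j : Fin n => x j)
  set τ := Tuple.sort (fun j : Fin n => y j)
  have h := hc.sum_le (Tuple.monotone_sort (fun j : Fin n => x j))
    (Tuple.monotone_sort (fun j : Fin n => y j)) Finset.univ (σ.trans τ.symm) (by simp)
  have e1 : ∀ i : Fin n, c (ordStat x n i, ordStat y n i) =
      c (((fun j : Fin n => x j) ∘ σ) i, ((fun j : Fin n => y j) ∘ τ) i) := by
    intro i; simp [ordStat, σ, τ]
  simp only [e1]
  refine h.trans (le_of_eq ?_)
  rw [← Equiv.sum_comp σ (fun i : Fin n => c (x i, y i))]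
  refine Finset.sum_congr rfl fun i _ => ?_
  simp [σ, τ]

lemma slln_sample (π : Measure (ℝ × ℝ)) [IsProbabilityMeasure π] (f : ℝ × ℝ → ℝ)
    (hf : Measurable f) (hfi : Integrable f π) :
    ∀ᵐ ω ∂(Measure.infinitePi (fun _ : ℕ => π)),
      Tendsto (fun n : ℕ => (∑ i ∈ Finset.range n, f (ω i)) / n) atTop (𝓝 (∫ z, f z ∂π)) := by
  have hmp : ∀ i : ℕ, MeasurePreserving (fun ω : ℕ → ℝ × ℝ => ω i)
      (Measure.infinitePi (fun _ : ℕ => π)) π := fun i =>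
    measurePreserving_eval_infinitePi (fun _ : ℕ => π) i
  have hm : ∀ i : ℕ, Measurable (fun ω : ℕ → ℝ × ℝ => f (ω i)) := fun i =>
    hf.comp (measurable_pi_apply i)
  have h := strong_law_ae_real (μ := Measure.infinitePi (fun _ : ℕ => π))
    (fun (i : ℕ) (ω : ℕ → ℝ × ℝ) => f (ω i))
    ((hmp 0).integrable_comp_of_integrable hfi)
    (fun i j hij => (iIndepFun_infinitePi (P := fun _ : ℕ => π) (X := fun _ => f)
      (fun _ => hf)).indepFun hij)
    (fun i => ⟨(hm i).aemeasurable, (hm 0).aemeasurable, by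
      have e : ∀ j : ℕ, (Measure.infinitePi (fun _ : ℕ => π)).map (fun ω => f (ω j)) = π.map f := by
        intro j
        rw [← (hmp j).map_eq, Measure.map_map hf (hmp j).measurable]
        · rw [(hmp j).map_eq]; rfl
      rw [e i, e 0]⟩)
  have e2 : ∫ ω, f (ω 0) ∂(Measure.infinitePi (fun _ : ℕ => π)) = ∫ z, f z ∂π := by
    rw [← (hmp 0).map_eq, integral_map (hmp 0).measurable.aemeasurable
      hf.aestronglyMeasurable, (hmp 0).map_eq]
  rw [e2] at h
  exact h

lemma step_lintegral (n : ℕ) (g : ℕ → ENNReal) :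
    ∫⁻ t in Ioo (0:ℝ) 1, ∑ i ∈ Finset.range n,
        (Ico ((i:ℝ) / n) (((i:ℝ) + 1) / n)).indicator (fun _ => g i) t
      ≤ ∑ i ∈ Finset.range n, g i * ENNReal.ofReal (1 / n) := by
  refine (lintegral_mono' Measure.restrict_le_self le_rfl).trans ?_
  rw [lintegral_finsetSum _ (fun i _ => measurable_const.indicator measurableSet_Ico)]
  refine Finset.sum_le_sum fun i _ => ?_
  rw [lintegral_indicator measurableSet_Ico, lintegral_const, Measure.restrict_apply_univ,
    Real.volume_Ico]
  gcongr
  apply le_of_eq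
  ring

lemma key_ineq (μ ν : Measure ℝ) [IsProbabilityMeasure μ] [IsProbabilityMeasure ν]
    (c : ℝ × ℝ → ℝ) (hc : LowerSemicontinuous c) (h0 : ∀ z, 0 ≤ c z) (hsub : Submodular c)
    (π : Measure (ℝ × ℝ)) (hπ : IsCoupling π μ ν) (hi : Integrable c π) :
    ∫⁻ t in Ioo (0:ℝ) 1, ENNReal.ofReal (c (quantile μ t, quantile ν t))
      ≤ ENNReal.ofReal (∫ z, c z ∂π) := by
  obtain ⟨h1, h2⟩ := hπ
  have : IsProbabilityMeasure π := by
    constructor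
    have := measure_univ (μ := μ)
    rw [← h1, Measure.map_apply measurable_fst MeasurableSet.univ] at this
    simpa using this
  have hcm : Measurable c := hc.measurable
  have A := slln_sample π c hcm hi
  have hind : ∀ q : ℝ, Measurable ((Iic q).indicator (fun _ => (1:ℝ))) := fun q =>
    measurable_const.indicator measurableSet_Iic
  have hindi : ∀ (q : ℝ) (ρ : Measure ℝ) [IsProbabilityMeasure ρ],
      ∫ x, (Iic q).indicator (fun _ => (1:ℝ)) x ∂ρ = (ρ (Iic q)).toReal := by
    intro q ρ _
    rw [integral_indicator measurableSet_Iic]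
    simp [Measure.real]
  have hbd : ∀ q : ℝ, ∀ x, ‖(Iic q).indicator (fun _ => (1:ℝ)) x‖ ≤ 1 := by
    intro q x
    by_cases h : x ∈ Iic q <;> simp [h]
  have B : ∀ q : ℚ, _ := fun q => slln_sample π
    (fun z => (Iic (q:ℝ)).indicator (fun _ => (1:ℝ)) z.1) ((hind q).comp measurable_fst)
    (Integrable.of_bound ((hind q).comp measurable_fst).aestronglyMeasurable 1
      (ae_of_all _ fun z => hbd q z.1))
  have C : ∀ q : ℚ, _ := fun q => slln_sample π
    (fun z => (Iic (q:ℝ)).indicator (fun _ => (1:ℝ)) z.2) ((hind q).comp measurable_snd)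
    (Integrable.of_bound ((hind q).comp measurable_snd).aestronglyMeasurable 1
      (ae_of_all _ fun z => hbd q z.2))
  obtain ⟨ω, hA, hB, hC⟩ := (A.and ((ae_all_iff.2 B).and (ae_all_iff.2 C))).exists
  have eB : ∀ q : ℚ, ∫ z : ℝ × ℝ, (Iic (q:ℝ)).indicator (fun _ => (1:ℝ)) z.1 ∂π
      = (μ (Iic (q:ℝ))).toReal := by
    intro q
    rw [← hindi q μ, ← h1, integral_map measurable_fst.aemeasurable
      (hind q).aestronglyMeasurable]
  have eC : ∀ q : ℚ, ∫ z : ℝ × ℝ, (Iic (q:ℝ)).indicator (fun _ => (1:ℝ)) z.2 ∂π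
      = (ν (Iic (q:ℝ))).toReal := by
    intro q
    rw [← hindi q ν, ← h2, integral_map measurable_snd.aemeasurable
      (hind q).aestronglyMeasurable]
  simp only [eB] at hB
  simp only [eC] at hC
  set x : ℕ → ℝ := fun i => (ω i).1
  set y : ℕ → ℝ := fun i => (ω i).2
  set g : ℕ → ℕ → ENNReal := fun n i => ENNReal.ofReal (c (ordStat x n i, ordStat y n i))
  set f : ℕ → ℝ → ENNReal := fun n t => ∑ i ∈ Finset.range n,
        (Ico ((i:ℝ) / n) (((i:ℝ) + 1) / n)).indicator (fun _ => g n i) t with hf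
  have hfm : ∀ n, Measurable (f n) := fun n =>
    Finset.measurable_fun_sum _ fun i _ => measurable_const.indicator measurableSet_Ico
  have hlim : Tendsto (fun n : ℕ => ENNReal.ofReal ((∑ i ∈ Finset.range n, c (ω i)) / n)) atTop
      (𝓝 (ENNReal.ofReal (∫ z, c z ∂π))) := ENNReal.tendsto_ofReal hA
  have hintle : ∀ n : ℕ, ∫⁻ t in Ioo (0:ℝ) 1, f n t ≤
      ENNReal.ofReal ((∑ i ∈ Finset.range n, c (ω i)) / n) := by
    intro n
    refine (step_lintegral n (g n)).trans ?_
    rw [← Finset.sum_mul, ← ENNReal.ofReal_sum_of_nonneg (fun i _ => h0 _),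
      ← ENNReal.ofReal_mul (Finset.sum_nonneg fun i _ => h0 _),
      div_eq_mul_one_div (∑ i ∈ Finset.range n, c (ω i)) (n : ℝ)]
    refine ENNReal.ofReal_le_ofReal ?_
    exact mul_le_mul_of_nonneg_right (ordStat_sum_le hsub x y n) (by positivity)
  have hae : ∀ᵐ t ∂(volume.restrict (Ioo (0:ℝ) 1)),
      ENNReal.ofReal (c (quantile μ t, quantile ν t)) ≤ liminf (fun n => f n t) atTop := by
    have N : ∀ ρ : Measure ℝ, ∀ᵐ t : ℝ ∂(volume.restrict (Ioo (0:ℝ) 1)),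
        ∀ q : ℚ, (ρ (Iic (q:ℝ))).toReal ≠ t := by
      intro ρ
      rw [ae_all_iff]
      intro q
      apply ae_restrict_of_ae
      simp [ae_iff]
    filter_upwards [N μ, N ν, ae_restrict_mem measurableSet_Ioo] with t hμ hν ht
    have T := (ordStat_tendsto μ x hB ht hμ).prodMk_nhds (ordStat_tendsto ν y hC ht hν)
    refine le_of_forall_lt fun r hr => ?_
    obtain ⟨r', hr1, hr2⟩ := exists_between hr
    refine hr1.trans_le (le_liminf_of_le (by isBoundedDefault) ?_)
    have hr' : r'.toReal < c (quantile μ t, quantile ν t) :=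
      (ENNReal.lt_ofReal_iff_toReal_lt hr2.ne_top).1 hr2
    filter_upwards [T.eventually (hc _ _ hr'), eventually_gt_atTop 0] with n hn hn0
    have hn' : (0:ℝ) < n := by exact_mod_cast hn0
    have htn : 0 ≤ t * n := by nlinarith [ht.1]
    have hlt : ⌊t * n⌋₊ < n := by
      rw [Nat.floor_lt htn]
      nlinarith [ht.2]
    have hmem : t ∈ Ico (((⌊t * n⌋₊ : ℕ) : ℝ) / n) ((((⌊t * n⌋₊ : ℕ) : ℝ) + 1) / n) := by
      constructor
      · rw [div_le_iff₀ hn']; exact Nat.floor_le htn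
      · rw [lt_div_iff₀ hn']; exact Nat.lt_floor_add_one _
    have h3 : g n ⌊t * n⌋₊ ≤ f n t := by
      have := Finset.single_le_sum (f := fun i : ℕ =>
        (Ico ((i:ℝ) / n) (((i:ℝ) + 1) / n)).indicator (fun _ => g n i) t)
        (fun i _ => zero_le) (Finset.mem_range.2 hlt)
      simp only [Set.indicator_of_mem hmem] at this
      exact this
    refine le_trans ?_ h3
    rw [← ENNReal.ofReal_toReal hr2.ne_top]
    exact ENNReal.ofReal_le_ofReal (le_of_lt hn)
  calc ∫⁻ t in Ioo (0:ℝ) 1, ENNReal.ofReal (c (quantile μ t, quantile ν t))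
      ≤ ∫⁻ t in Ioo (0:ℝ) 1, liminf (fun n => f n t) atTop := lintegral_mono_ae hae
    _ ≤ liminf (fun n => ∫⁻ t in Ioo (0:ℝ) 1, f n t) atTop := lintegral_liminf_le hfm
    _ ≤ liminf (fun n : ℕ => ENNReal.ofReal ((∑ i ∈ Finset.range n, c (ω i)) / n)) atTop :=
        liminf_le_liminf (Eventually.of_forall hintle)
    _ = ENNReal.ofReal (∫ z, c z ∂π) := hlim.liminf_eq

/-- Cambanis–Simons–Stout / scalar optimal transport: for a submodular cost satisfying the
standing assumption, the optimal transport cost between measures on `ℝ` equals the cost of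
the comonotone (quantile) coupling. -/
theorem scalar_ot_closed_form
    (μ ν : Measure ℝ) [IsProbabilityMeasure μ] [IsProbabilityMeasure ν]
    (c : ℝ × ℝ → ℝ) (hc : LowerSemicontinuous c)
    (a : ℝ → ℝ) (b : ℝ → ℝ)
    (ha : UpperSemicontinuous a) (hb : UpperSemicontinuous b)
    (hai : Integrable a μ) (hbi : Integrable b ν)
    (hab : ∀ x y, a x + b y ≤ c (x, y))
    (hsub : Submodular c) :
    sInf {r : ℝ | ∃ π : Measure (ℝ × ℝ), IsCoupling π μ ν ∧ Integrable c π ∧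
        r = ∫ z, c z ∂π}
      = ∫ t in Ioo (0 : ℝ) 1, c (quantile μ t, quantile ν t) := by
  have hQμ := quantile_aemeasurable μ
  have hQν := quantile_aemeasurable ν
  have hcm : Measurable c := hc.measurable
  have ham : Measurable a := ha.measurable
  have hbm : Measurable b := hb.measurable
  set P : Measure ℝ := volume.restrict (Ioo (0:ℝ) 1) with hP
  have hQ : AEMeasurable (fun t => (quantile μ t, quantile ν t)) P := hQμ.prodMk hQν
  -- integrability and integrals of the marginal functions along the quantiles
  have haQ : Integrable (fun t => a (quantile μ t)) P := by
    have := hai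
    rw [← quantile_map μ, integrable_map_measure ham.aestronglyMeasurable hQμ] at this
    exact this
  have hbQ : Integrable (fun t => b (quantile ν t)) P := by
    have := hbi
    rw [← quantile_map ν, integrable_map_measure hbm.aestronglyMeasurable hQν] at this
    exact this
  have haQe : ∫ t, a (quantile μ t) ∂P = ∫ x, a x ∂μ := by
    conv_rhs => rw [← quantile_map μ]
    rw [integral_map hQμ ham.aestronglyMeasurable]
  have hbQe : ∫ t, b (quantile ν t) ∂P = ∫ x, b x ∂ν := by
    conv_rhs => rw [← quantile_map ν]
    rw [integral_map hQν hbm.aestronglyMeasurable]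
  -- the nonnegative reduced cost
  set d : ℝ × ℝ → ℝ := fun z => c z - a z.1 - b z.2 with hd
  have hd0 : ∀ z, 0 ≤ d z := by
    intro z
    have := hab z.1 z.2
    simp only [hd]
    linarith
  have hdl : LowerSemicontinuous d := by
    have h1 : LowerSemicontinuous (fun z : ℝ × ℝ => -a z.1) :=
      fun z r hr => by
        have := (ha z.1 (-r) (by linarith))
        filter_upwards [continuous_fst.continuousAt.eventually this] with w hw
        linarith
    have h2 : LowerSemicontinuous (fun z : ℝ × ℝ => -b z.2) :=
      fun z r hr => by
        have := (hb z.2 (-r) (by linarith))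
        filter_upwards [continuous_snd.continuousAt.eventually this] with w hw
        linarith
    have h3 := (hc.add h1).add h2
    have e : d = fun z => c z + -a z.1 + -b z.2 := by
      funext z; simp only [hd]; ring
    rw [e]
    exact h3
  have hds : Submodular d := by
    intro x x' y y' hx hy
    have := hsub x x' y y' hx hy
    simp only [hd]
    linarith
  have hdm : Measurable d := hdl.measurable
  -- main comparison
  have main : ∀ π : Measure (ℝ × ℝ), IsCoupling π μ ν → Integrable c π →
      Integrable (fun t => c (quantile μ t, quantile ν t)) P ∧
      ∫ t, c (quantile μ t, quantile ν t) ∂P ≤ ∫ z, c z ∂π := by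
    intro π hπ hi
    have haπ : Integrable (fun z : ℝ × ℝ => a z.1) π := by
      have := hai
      rw [← hπ.1, integrable_map_measure ham.aestronglyMeasurable measurable_fst.aemeasurable]
        at this
      exact this
    have hbπ : Integrable (fun z : ℝ × ℝ => b z.2) π := by
      have := hbi
      rw [← hπ.2, integrable_map_measure hbm.aestronglyMeasurable measurable_snd.aemeasurable]
        at this
      exact this
    have haπe : ∫ z, a z.1 ∂π = ∫ x, a x ∂μ := by
      conv_rhs => rw [← hπ.1]
      rw [integral_map measurable_fst.aemeasurable ham.aestronglyMeasurable]
    have hbπe : ∫ z, b z.2 ∂π = ∫ x, b x ∂ν := by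
      conv_rhs => rw [← hπ.2]
      rw [integral_map measurable_snd.aemeasurable hbm.aestronglyMeasurable]
    have hdi : Integrable d π := (hi.sub haπ).sub hbπ
    have hde : ∫ z, d z ∂π = ∫ z, c z ∂π - ∫ x, a x ∂μ - ∫ x, b x ∂ν := by
      simp only [hd]
      rw [integral_sub (f := fun z => c z - a z.1) (hi.sub haπ) hbπ, integral_sub hi haπ, haπe, hbπe]
    have K := key_ineq μ ν d hdl hd0 hds π hπ hdi
    have hdQm : AEStronglyMeasurable (fun t => d (quantile μ t, quantile ν t)) P :=
      (hdm.comp_aemeasurable hQ).aestronglyMeasurable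
    have hdQ : Integrable (fun t => d (quantile μ t, quantile ν t)) P := by
      refine ⟨hdQm, ?_⟩
      rw [hasFiniteIntegral_iff_ofReal (ae_of_all _ fun t => hd0 _)]
      exact K.trans_lt ENNReal.ofReal_lt_top
    have hcQ : Integrable (fun t => c (quantile μ t, quantile ν t)) P := by
      refine ((hdQ.add haQ).add hbQ).congr (ae_of_all _ fun t => ?_)
      simp only [hd, Pi.add_apply]
      ring
    refine ⟨hcQ, ?_⟩
    have hdQe : ∫ t, d (quantile μ t, quantile ν t) ∂P =
        ∫ t, c (quantile μ t, quantile ν t) ∂P - ∫ x, a x ∂μ - ∫ x, b x ∂ν := by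
      simp only [hd]
      rw [integral_sub (f := fun t => c (quantile μ t, quantile ν t) - a (quantile μ t))
        (hcQ.sub haQ) hbQ, integral_sub hcQ haQ, haQe, hbQe]
    have hle : ∫ t, d (quantile μ t, quantile ν t) ∂P ≤ ∫ z, d z ∂π := by
      rw [← ENNReal.ofReal_le_ofReal_iff (integral_nonneg hd0),
        ofReal_integral_eq_lintegral_ofReal hdQ (ae_of_all _ fun t => hd0 _)]
      exact K
    rw [hdQe, hde] at hle
    linarith
  by_cases hcQ : Integrable (fun t => c (quantile μ t, quantile ν t)) P
  · refine IsLeast.csInf_eq ⟨⟨P.map (fun t => (quantile μ t, quantile ν t)), ⟨?_, ?_⟩, ?_, ?_⟩, ?_⟩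
    · rw [AEMeasurable.map_map_of_aemeasurable measurable_fst.aemeasurable hQ]
      exact quantile_map μ
    · rw [AEMeasurable.map_map_of_aemeasurable measurable_snd.aemeasurable hQ]
      exact quantile_map ν
    · rw [integrable_map_measure hcm.aestronglyMeasurable hQ]
      exact hcQ
    · rw [integral_map hQ hcm.aestronglyMeasurable]
    · rintro r ⟨π, hπ, hi, rfl⟩
      exact (main π hπ hi).2
  · rw [integral_undef hcQ]
    convert Real.sInf_empty
    rw [Set.eq_empty_iff_forall_notMem]
    rintro r ⟨π, hπ, hi, -⟩
    exact hcQ (main π hπ hi).1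
end

section
/- (Optimal transport with binary cost) Let X and Y be Polish spaces, μ and ν Borel probability measures on X and Y, and Γ a non-empty open subset of X × Y. Then inf_{π ∈ M(μ,ν)} π(Γ) = sup over closed subsets A of X of [ μ(A) − ν(A^Γ) ], where A^Γ = { y ∈ Y : there exists x ∈ A with (x,y) ∉ Γ }. -/
open MeasureTheory Set

lemma exists_coupling_ge {X Y : Type*} [MeasurableSpace X] [MeasurableSpace Y]
    (μ : Measure X) (ν : Measure Y) [IsProbabilityMeasure μ] [IsProbabilityMeasure ν]
    (ρ : Measure (X × Y)) (h1 : ρ.map Prod.fst ≤ μ) (h2 : ρ.map Prod.snd ≤ ν) :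
    ∃ π, IsCoupling π μ ν ∧ ρ ≤ π := by
  have : IsFiniteMeasure (ρ.map Prod.fst) := isFiniteMeasure_of_le μ h1
  have : IsFiniteMeasure (ρ.map Prod.snd) := isFiniteMeasure_of_le ν h2
  set α := μ - ρ.map Prod.fst with hα
  set β := ν - ρ.map Prod.snd with hβ
  have e1 : α + ρ.map Prod.fst = μ := Measure.sub_add_cancel_of_le h1
  have e2 : β + ρ.map Prod.snd = ν := Measure.sub_add_cancel_of_le h2
  have : IsFiniteMeasure α := isFiniteMeasure_of_le μ Measure.sub_le
  have : IsFiniteMeasure β := isFiniteMeasure_of_le ν Measure.sub_le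
  have m : α univ = β univ := by
    rw [hα, hβ, Measure.sub_apply .univ h1, Measure.sub_apply .univ h2,
      Measure.map_apply measurable_fst .univ, Measure.map_apply measurable_snd .univ]
    simp
  refine ⟨ρ + (α univ)⁻¹ • α.prod β, ⟨?_, ?_⟩, Measure.le_add_right le_rfl⟩
  · rw [Measure.map_add _ _ measurable_fst, Measure.map_smul, Measure.map_fst_prod, ← m, smul_smul]
    conv_rhs => rw [← e1]
    rw [add_comm]
    congr 1
    by_cases h0 : α univ = 0
    · simp [Measure.measure_univ_eq_zero.1 h0]
    · rw [ENNReal.inv_mul_cancel h0 (measure_ne_top _ _), one_smul]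
  · rw [Measure.map_add _ _ measurable_snd, Measure.map_smul, Measure.map_snd_prod, smul_smul]
    conv_rhs => rw [← e2]
    rw [add_comm]
    congr 1
    by_cases h0 : α univ = 0
    · rw [m] at h0
      simp [Measure.measure_univ_eq_zero.1 h0]
    · rw [ENNReal.inv_mul_cancel h0 (measure_ne_top _ _), one_smul]

lemma exists_cells {X : Type*} [MeasurableSpace X] [MetricSpace X] [SecondCountableTopology X]
    [BorelSpace X] (μ : Measure X) [IsProbabilityMeasure μ] (δ ε : ℝ) (hδ : 0 < δ) (hε : 0 < ε) :
    ∃ (n : ℕ) (s : Fin n → Set X), (∀ i, MeasurableSet (s i)) ∧ Pairwise (Function.onFun Disjoint s) ∧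
      (∀ i, ∀ x ∈ s i, ∀ y ∈ s i, dist x y < δ) ∧ μ.real (⋃ i, s i)ᶜ ≤ ε := by
  have hne : Nonempty X := by
    by_contra h
    rw [not_nonempty_iff] at h
    have := measure_univ (μ := μ)
    simp [Measure.eq_zero_of_isEmpty μ] at this
  let B : ℕ → Set X := fun n => Metric.ball (TopologicalSpace.denseSeq X n) (δ / 2)
  have hB : ∀ n, MeasurableSet (B n) := fun n => measurableSet_ball
  have hU : ⋃ n, disjointed B n = univ := by
    rw [iUnion_disjointed, eq_univ_iff_forall]
    intro x
    obtain ⟨n, hn⟩ := (TopologicalSpace.denseRange_denseSeq X).exists_dist_lt x (half_pos hδ)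
    exact mem_iUnion.2 ⟨n, hn⟩
  have hM : ∀ n, MeasurableSet (disjointed B n) := fun n => MeasurableSet.disjointed hB n
  have hs : HasSum (fun n => μ.real (disjointed B n)) 1 := by
    have h1 := measure_iUnion (μ := μ) (disjoint_disjointed B) hM
    rw [hU, measure_univ] at h1
    have h2 := ENNReal.hasSum_toReal (f := fun n => μ (disjointed B n)) (by rw [← h1]; simp)
    have h3 : (∑' n, (μ (disjointed B n)).toReal) = 1 := by
      rw [← ENNReal.tsum_toReal_eq (fun n => measure_ne_top _ _), ← h1]; simp
    rw [h3] at h2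
    exact h2
  obtain ⟨n, hn⟩ := ((hs.tendsto_sum_nat).eventually (lt_mem_nhds (show 1 - ε < 1 by linarith))).exists
  refine ⟨n, fun i => disjointed B i, fun i => hM i, ?_, ?_, ?_⟩
  · intro i j hij
    exact disjoint_disjointed B (fun h => hij (Fin.ext h))
  · intro i x hx y hy
    have hx' := disjointed_subset B i hx
    have hy' := disjointed_subset B i hy
    have := dist_triangle_right x y (TopologicalSpace.denseSeq X i)
    simp only [B, Metric.mem_ball] at hx' hy'
    linarith
  · show μ.real (⋃ i : Fin n, disjointed B i)ᶜ ≤ ε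
    rw [probReal_compl_eq_one_sub (MeasurableSet.iUnion fun i : Fin n => hM i),
      measureReal_iUnion_fintype (f := fun i : Fin n => disjointed B i) (fun i j hij => disjoint_disjointed B (fun h => hij (Fin.ext h)))
        (fun i => hM i), Fin.sum_univ_eq_sum_range (fun i => μ.real (disjointed B i))]
    linarith

lemma frac_hall {ι κ : Type*} [Fintype ι] [Fintype κ] (p : ι → ℝ) (q : κ → ℝ)
    (hp : ∀ i, 0 ≤ p i) (hq : ∀ j, 0 ≤ q j) (R : ι → κ → Prop) (t : ℝ) (ht : 0 ≤ t)
    (h : ∀ I : Finset ι, ∃ J : Finset κ, (∀ j ∈ J, ∃ i ∈ I, R i j) ∧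
      ∑ i ∈ I, p i ≤ ∑ j ∈ J, q j + t) (ε : ℝ) (hε : 0 < ε) :
    ∃ c : ι → κ → ℝ, (∀ i j, 0 ≤ c i j) ∧ (∀ i j, c i j ≠ 0 → R i j) ∧
      (∀ i, ∑ j, c i j ≤ p i) ∧ (∀ j, ∑ i, c i j ≤ q j) ∧
      ∑ i, p i ≤ ∑ i, ∑ j, c i j + t + ε := by
  classical
  obtain ⟨N, hN⟩ := exists_nat_gt (((Fintype.card ι : ℝ) + Fintype.card κ + 1) / ε)
  have hN0 : (0 : ℝ) < N := lt_of_le_of_lt (by positivity) hN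
  rw [div_lt_iff₀ hε] at hN
  let a : ι → ℕ := fun i => ⌊N * p i⌋₊
  let b : κ → ℕ := fun j => ⌊N * q j⌋₊
  let D : ℕ := ⌈N * t⌉₊ + Fintype.card κ
  have ha : ∀ i, (a i : ℝ) ≤ N * p i := fun i => Nat.floor_le (mul_nonneg hN0.le (hp i))
  have ha' : ∀ i, N * p i ≤ a i + 1 := fun i => (Nat.lt_floor_add_one _).le
  have hb : ∀ j, (b j : ℝ) ≤ N * q j := fun j => Nat.floor_le (mul_nonneg hN0.le (hq j))
  have hb' : ∀ j, N * q j ≤ b j + 1 := fun i => (Nat.lt_floor_add_one _).le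
  have hD : (N * t + Fintype.card κ : ℝ) ≤ D := by
    simp only [D]; push_cast; gcongr; exact Nat.le_ceil _
  have hD' : (D : ℝ) ≤ N * t + 1 + Fintype.card κ := by
    simp only [D]; push_cast; gcongr
    exact (Nat.ceil_lt_add_one (mul_nonneg hN0.le ht)).le
  let r : (Σ i, Fin (a i)) → ((Σ j, Fin (b j)) ⊕ Fin D) → Prop :=
    fun v w => Sum.elim (fun w => R v.1 w.1) (fun _ => True) w
  have hall := (Fintype.all_card_le_filter_rel_iff_exists_injective r).1 (by
    intro A
    rcases A.eq_empty_or_nonempty with rfl | hA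
    · simp
    obtain ⟨J, hJ, hJI⟩ := h (A.image Sigma.fst)
    have h1 : A ⊆ (A.image Sigma.fst).sigma (fun _ => Finset.univ) := by
      intro v hv
      simp only [Finset.mem_sigma, Finset.mem_univ, and_true]
      exact Finset.mem_image_of_mem _ hv
    have h2 : (J.sigma (fun j => (Finset.univ : Finset (Fin (b j))))).disjSum
        (Finset.univ : Finset (Fin D)) ⊆ Finset.univ.filter (fun w => ∃ v ∈ A, r v w) := by
      intro w hw
      simp only [Finset.mem_filter, Finset.mem_univ, true_and]
      rcases w with w | w
      · simp only [Finset.inl_mem_disjSum, Finset.mem_sigma, Finset.mem_univ, and_true] at hw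
        obtain ⟨i, hi, hR⟩ := hJ _ hw
        obtain ⟨v, hv, rfl⟩ := Finset.mem_image.1 hi
        exact ⟨v, hv, hR⟩
      · obtain ⟨v, hv⟩ := hA
        exact ⟨v, hv, trivial⟩
    have h1' := Finset.card_le_card h1
    have h2' := Finset.card_le_card h2
    refine h1'.trans (le_trans ?_ h2')
    simp only [Finset.card_sigma, Finset.card_univ, Fintype.card_fin, Finset.card_disjSum]
    have : ((∑ i ∈ A.image Sigma.fst, a i : ℕ) : ℝ) ≤ ((∑ j ∈ J, b j + D : ℕ) : ℝ) := by
      push_cast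
      calc ∑ i ∈ A.image Sigma.fst, (a i : ℝ) ≤ ∑ i ∈ A.image Sigma.fst, N * p i :=
            Finset.sum_le_sum fun i _ => ha i
        _ = N * ∑ i ∈ A.image Sigma.fst, p i := by rw [Finset.mul_sum]
        _ ≤ N * (∑ j ∈ J, q j + t) := by gcongr
        _ = ∑ j ∈ J, N * q j + N * t := by rw [mul_add, Finset.mul_sum]
        _ ≤ ∑ j ∈ J, ((b j : ℝ) + 1) + N * t := by gcongr with j _; exact hb' j
        _ = ∑ j ∈ J, (b j : ℝ) + (J.card + N * t) := by
            rw [Finset.sum_add_distrib]; simp; ring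
        _ ≤ ∑ j ∈ J, (b j : ℝ) + D := by
            have : (J.card : ℝ) ≤ Fintype.card κ := by exact_mod_cast Finset.card_le_univ J
            linarith
    exact_mod_cast this)
  obtain ⟨f, hf, hfr⟩ := hall
  let g : (Σ i, Fin (a i)) → Option κ := fun v => Sum.elim (fun w => some w.1) (fun _ => none) (f v)
  let e : ι → κ → ℝ := fun i j => ∑ v, if v.1 = i ∧ g v = some j then (1 : ℝ) else 0
  have he0 : ∀ i j, 0 ≤ e i j := fun i j => Finset.sum_nonneg fun v _ => by split_ifs <;> simp
  have hg : ∀ v j, g v = some j → R v.1 j := by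
    intro v j hv
    have := hfr v
    rcases hw : f v with w | w
    · simp only [g, r, hw, Sum.elim_inl, Option.some.injEq] at hv this
      exact hv ▸ this
    · simp [g, hw] at hv
  have hrow : ∀ i, ∑ j, e i j ≤ a i := by
    intro i
    simp only [e]
    rw [Finset.sum_comm]
    calc _ ≤ ∑ v : (Σ i, Fin (a i)), if v.1 = i then (1 : ℝ) else 0 := by
          refine Finset.sum_le_sum fun v _ => ?_
          by_cases hv : v.1 = i
          · simp only [hv, true_and, if_true]
            rcases hgv : g v with _ | j
            · simp
            · simp
          · simp [hv]
      _ = a i := by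
          rw [Fintype.sum_sigma]
          rw [Finset.sum_eq_single i]
          · simp
          · intro x _ hx
            simp [hx]
          · simp
  have hcol' : ∀ j, ∑ i, e i j = ∑ v, if g v = some j then (1 : ℝ) else 0 := by
    intro j
    simp only [e]
    rw [Finset.sum_comm]
    refine Finset.sum_congr rfl fun v _ => ?_
    by_cases hv : g v = some j <;> simp [hv]
  have hcol : ∀ j, ∑ i, e i j ≤ b j := by
    intro j
    rw [hcol', Finset.sum_boole]
    have : (Finset.univ.filter (fun v => g v = some j)).card ≤
        ((Finset.univ : Finset (Fin (b j))).image
          (fun k => (Sum.inl ⟨j, k⟩ : (Σ j, Fin (b j)) ⊕ Fin D))).card := by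
      refine Finset.card_le_card_of_injOn f ?_ hf.injOn
      intro v hv
      simp only [Finset.coe_filter, Finset.mem_univ, true_and, Set.mem_ofPred_eq] at hv
      rcases hw : f v with w | w
      · simp only [g, hw, Sum.elim_inl, Option.some.injEq] at hv
        subst hv
        simp
      · simp [g, hw] at hv
    have h3 := this.trans Finset.card_image_le
    simp only [Finset.card_univ, Fintype.card_fin] at h3
    exact_mod_cast h3
  have htot : (∑ i, (a i : ℝ)) ≤ ∑ i, ∑ j, e i j + D := by
    rw [Finset.sum_comm]
    simp only [hcol']
    rw [Finset.sum_comm]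
    have h1 : (Finset.univ.filter (fun v => g v = none)).card ≤ D := by
      have : (Finset.univ.filter (fun v => g v = none)).card ≤
        ((Finset.univ : Finset (Fin D)).image
          (fun k => (Sum.inr k : (Σ j, Fin (b j)) ⊕ Fin D))).card := by
        refine Finset.card_le_card_of_injOn f ?_ hf.injOn
        intro v hv
        simp only [Finset.coe_filter, Finset.mem_univ, true_and, Set.mem_ofPred_eq] at hv
        rcases hw : f v with w | w
        · simp [g, hw] at hv
        · simp
      have h3 := this.trans Finset.card_image_le
      simpa using h3
    have h2 : (∑ i, (a i : ℝ)) = ∑ v : (Σ i, Fin (a i)), (1 : ℝ) := by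
      simp
    have h4 : ∑ v : (Σ i, Fin (a i)), (1 : ℝ) =
        ∑ v, ∑ j, (if g v = some j then (1 : ℝ) else 0) +
          ∑ v, (if g v = none then (1 : ℝ) else 0) := by
      rw [← Finset.sum_add_distrib]
      refine Finset.sum_congr rfl fun v _ => ?_
      rcases hgv : g v with _ | j <;> simp
    rw [h2, h4, Finset.sum_boole]
    gcongr
  refine ⟨fun i j => e i j / N, fun i j => div_nonneg (he0 i j) hN0.le, ?_, ?_, ?_, ?_⟩
  · intro i j hij
    have : e i j ≠ 0 := fun h0 => hij (by simp [h0])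
    obtain ⟨v, -, hv⟩ := Finset.exists_ne_zero_of_sum_ne_zero this
    have : v.1 = i ∧ g v = some j := by
      by_contra hc; simp [hc] at hv
    exact this.1 ▸ hg v j this.2
  · intro i
    rw [← Finset.sum_div, div_le_iff₀ hN0]
    linarith [hrow i, ha i]
  · intro j
    rw [← Finset.sum_div, div_le_iff₀ hN0]
    linarith [hcol j, hb j]
  · simp only [← Finset.sum_div]
    have h5 : N * ∑ i, p i ≤ ∑ i, (a i : ℝ) + Fintype.card ι := by
      rw [Finset.mul_sum]
      calc _ ≤ ∑ i, ((a i : ℝ) + 1) := Finset.sum_le_sum fun i _ => ha' i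
        _ = _ := by rw [Finset.sum_add_distrib]; simp
    have h6 : N * ∑ i, p i ≤ ∑ i, ∑ j, e i j + N * t + N * ε := by linarith
    have : ∑ i, p i ≤ (∑ i, ∑ j, e i j + N * t + N * ε) / N := by
      rw [le_div_iff₀ hN0]; linarith
    refine this.trans (le_of_eq ?_)
    field_simp

lemma exists_approx_s18 {X Y : Type*} [MeasurableSpace X] [MetricSpace X] [SecondCountableTopology X]
    [BorelSpace X] [MeasurableSpace Y] [MetricSpace Y] [SecondCountableTopology Y]
    [BorelSpace Y] (μ : Measure X) (ν : Measure Y) [IsProbabilityMeasure μ]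
    [IsProbabilityMeasure ν] (F : Set (X × Y)) (s : ℝ) (hs : 0 ≤ s)
    (h : ∀ A : Set X, IsClosed A → μ.real A ≤ ν.real {y | ∃ x ∈ A, (x, y) ∈ F} + s)
    (δ ε : ℝ) (hδ : 0 < δ) (hε : 0 < ε) :
    ∃ π, IsCoupling π μ ν ∧ ENNReal.ofReal (1 - s - ε) ≤ π (Metric.cthickening δ F) := by
  classical
  obtain ⟨n, S, hSm, hSd, hSδ, hSε⟩ := exists_cells μ (δ / 2) (ε / 3) (by positivity) (by positivity)
  obtain ⟨m, T, hTm, hTd, hTδ, hTε⟩ := exists_cells ν (δ / 2) (ε / 3) (by positivity) (by positivity)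
  let R : Fin n → Fin m → Prop := fun i j => ∃ x' ∈ S i, ∃ y ∈ T j, ∃ x, (x, y) ∈ F ∧ dist x' x < δ / 2
  obtain ⟨c, hc0, hcR, hrow, hcol, htot⟩ := frac_hall (fun i => μ.real (S i)) (fun j => ν.real (T j))
    (fun _ => measureReal_nonneg) (fun _ => measureReal_nonneg) R (s + ε / 3) (by positivity) (by
      intro I
      refine ⟨Finset.univ.filter (fun j => ∃ i ∈ I, R i j), by simp, ?_⟩
      set J := Finset.univ.filter (fun j => ∃ i ∈ I, R i j)
      have h1 : ∑ i ∈ I, μ.real (S i) = μ.real (⋃ i ∈ I, S i) :=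
        (measureReal_biUnion_finset (fun i _ j _ hij => hSd hij) (fun i _ => hSm i)).symm
      have h2 : {y | ∃ x ∈ closure (⋃ i ∈ I, S i), (x, y) ∈ F} ⊆ (⋃ j ∈ J, T j) ∪ (⋃ j, T j)ᶜ := by
        rintro y ⟨x, hx, hxy⟩
        by_cases hy : y ∈ ⋃ j, T j
        · left
          obtain ⟨j, hj⟩ := mem_iUnion.1 hy
          obtain ⟨x', hx', hd⟩ := Metric.mem_closure_iff.1 hx (δ / 2) (by positivity)
          simp only [mem_iUnion] at hx' ⊢
          obtain ⟨i, hi, hxi⟩ := hx'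
          refine ⟨j, ?_, hj⟩
          simp only [J, Finset.mem_filter, Finset.mem_univ, true_and]
          exact ⟨i, hi, x', hxi, y, hj, x, hxy, by rwa [dist_comm]⟩
        · exact Or.inr hy
      calc ∑ i ∈ I, μ.real (S i) = μ.real (⋃ i ∈ I, S i) := h1
        _ ≤ μ.real (closure (⋃ i ∈ I, S i)) := measureReal_mono subset_closure
        _ ≤ _ := h _ isClosed_closure
        _ ≤ ν.real ((⋃ j ∈ J, T j) ∪ (⋃ j, T j)ᶜ) + s := by
            have := measureReal_mono (μ := ν) h2
            linarith
        _ ≤ ν.real (⋃ j ∈ J, T j) + ν.real (⋃ j, T j)ᶜ + s := by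
            gcongr
            exact measureReal_union_le _ _
        _ ≤ ∑ j ∈ J, ν.real (T j) + ε / 3 + s := by
            gcongr
            exact measureReal_biUnion_finset_le _ _
        _ = _ := by ring) (ε / 3) (by positivity)
  let P : Fin n → Measure X := fun i => (μ (S i))⁻¹ • μ.restrict (S i)
  let Q : Fin m → Measure Y := fun j => (ν (T j))⁻¹ • ν.restrict (T j)
  have hP1 : ∀ i, P i univ ≤ 1 := fun i => by
    simp only [P, Measure.smul_apply, Measure.restrict_apply_univ, smul_eq_mul]
    exact ENNReal.inv_mul_le_one _
  have hQ1 : ∀ j, Q j univ ≤ 1 := fun j => by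
    simp only [Q, Measure.smul_apply, Measure.restrict_apply_univ, smul_eq_mul]
    exact ENNReal.inv_mul_le_one _
  have hPf : ∀ i, IsFiniteMeasure (P i) := fun i => ⟨(hP1 i).trans_lt (by simp)⟩
  have hQf : ∀ j, IsFiniteMeasure (Q j) := fun j => ⟨(hQ1 j).trans_lt (by simp)⟩
  let ρ : Measure (X × Y) := ∑ i, ∑ j, ENNReal.ofReal (c i j) • (P i).prod (Q j)
  have hρ : ∀ A : Set (X × Y), ρ A = ∑ i, ∑ j, ENNReal.ofReal (c i j) * (P i).prod (Q j) A := by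
    intro A
    simp [ρ, Measure.finsetSum_apply]
  have hrow' : ∀ i, ∑ j, ENNReal.ofReal (c i j) ≤ μ (S i) := by
    intro i
    rw [← ENNReal.ofReal_sum_of_nonneg (fun j _ => hc0 i j), ← ofReal_measureReal]
    exact ENNReal.ofReal_le_ofReal (hrow i)
  have hcol' : ∀ j, ∑ i, ENNReal.ofReal (c i j) ≤ ν (T j) := by
    intro j
    rw [← ENNReal.ofReal_sum_of_nonneg (fun i _ => hc0 i j), ← ofReal_measureReal]
    exact ENNReal.ofReal_le_ofReal (hcol j)
  have hρ1 : ρ.map Prod.fst ≤ μ := by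
    refine Measure.le_iff.2 fun A hA => ?_
    rw [Measure.map_apply measurable_fst hA, hρ, ← prod_univ]
    simp only [Measure.prod_prod]
    calc ∑ i, ∑ j, ENNReal.ofReal (c i j) * (P i A * Q j univ)
        ≤ ∑ i, ∑ j, ENNReal.ofReal (c i j) * (P i A * 1) := by
          gcongr with i _ j _; exact hQ1 j
      _ = ∑ i, (∑ j, ENNReal.ofReal (c i j)) * P i A := by
          simp only [mul_one, Finset.sum_mul]
      _ ≤ ∑ i, μ (S i) * P i A := by
          gcongr with i _; exact hrow' i
      _ ≤ ∑ i, μ (A ∩ S i) := by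
          gcongr with i _
          simp only [P, Measure.smul_apply, Measure.restrict_apply hA, smul_eq_mul]
          rw [← mul_assoc]
          exact mul_le_of_le_one_left (zero_le) (ENNReal.mul_inv_le_one _)
      _ = μ (⋃ i, A ∩ S i) := by
          rw [measure_iUnion (fun i j hij => (hSd hij).mono inter_subset_right inter_subset_right)
            (fun i => hA.inter (hSm i)), tsum_fintype]
      _ ≤ μ A := measure_mono (iUnion_subset fun i => inter_subset_left)
  have hρ2 : ρ.map Prod.snd ≤ ν := by
    refine Measure.le_iff.2 fun A hA => ?_
    rw [Measure.map_apply measurable_snd hA, hρ, ← univ_prod, Finset.sum_comm]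
    simp only [Measure.prod_prod]
    calc ∑ j, ∑ i, ENNReal.ofReal (c i j) * (P i univ * Q j A)
        ≤ ∑ j, ∑ i, ENNReal.ofReal (c i j) * (1 * Q j A) := by
          gcongr with j _ i _; exact hP1 i
      _ = ∑ j, (∑ i, ENNReal.ofReal (c i j)) * Q j A := by
          simp only [one_mul, Finset.sum_mul]
      _ ≤ ∑ j, ν (T j) * Q j A := by
          gcongr with j _; exact hcol' j
      _ ≤ ∑ j, ν (A ∩ T j) := by
          gcongr with j _
          simp only [Q, Measure.smul_apply, Measure.restrict_apply hA, smul_eq_mul]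
          rw [← mul_assoc]
          exact mul_le_of_le_one_left (zero_le) (ENNReal.mul_inv_le_one _)
      _ = ν (⋃ j, A ∩ T j) := by
          rw [measure_iUnion (fun i j hij => (hTd hij).mono inter_subset_right inter_subset_right)
            (fun i => hA.inter (hTm i)), tsum_fintype]
      _ ≤ ν A := measure_mono (iUnion_subset fun i => inter_subset_left)
  obtain ⟨π, hπ, hρπ⟩ := exists_coupling_ge μ ν ρ hρ1 hρ2
  refine ⟨π, hπ, le_trans ?_ (hρπ _)⟩
  have hμ1 : 1 - ε / 3 ≤ ∑ i, μ.real (S i) := by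
    rw [probReal_compl_eq_one_sub (MeasurableSet.iUnion hSm),
      measureReal_iUnion_fintype hSd hSm] at hSε
    linarith
  calc ENNReal.ofReal (1 - s - ε) ≤ ENNReal.ofReal (∑ i, ∑ j, c i j) :=
        ENNReal.ofReal_le_ofReal (by linarith)
    _ = ∑ i, ∑ j, ENNReal.ofReal (c i j) := by
        rw [ENNReal.ofReal_sum_of_nonneg (fun i _ => Finset.sum_nonneg fun j _ => hc0 i j)]
        exact Finset.sum_congr rfl fun i _ => ENNReal.ofReal_sum_of_nonneg (fun j _ => hc0 i j)
    _ ≤ ρ (Metric.cthickening δ F) := by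
        rw [hρ]
        gcongr with i _ j _
        by_cases hz : c i j = 0
        · simp [hz]
        have hpos : 0 < c i j := lt_of_le_of_ne (hc0 i j) (Ne.symm hz)
        have hpos' : ENNReal.ofReal (c i j) ≠ 0 := by simpa using hpos
        have hSi : μ (S i) ≠ 0 := fun h0 => hpos' (by
          have := (Finset.single_le_sum (f := fun j => ENNReal.ofReal (c i j))
            (fun _ _ => zero_le) (Finset.mem_univ j)).trans (hrow' i)
          rw [h0] at this
          exact le_antisymm this zero_le)
        have hTj : ν (T j) ≠ 0 := fun h0 => hpos' (by
          have := (Finset.single_le_sum (f := fun i => ENNReal.ofReal (c i j))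
            (fun _ _ => zero_le) (Finset.mem_univ i)).trans (hcol' j)
          rw [h0] at this
          exact le_antisymm this zero_le)
        have hsub : S i ×ˢ T j ⊆ Metric.cthickening δ F := by
          obtain ⟨x', hx', y, hy, x, hxy, hd⟩ := hcR i j hz
          rintro ⟨u, v⟩ ⟨hu, hv⟩
          refine Metric.mem_cthickening_of_dist_le _ (x, y) _ _ hxy ?_
          rw [Prod.dist_eq]
          refine max_le ?_ ?_
          · have := dist_triangle u x' x
            have := hSδ i u hu x' hx'
            simp only at *
            linarith
          · have := hTδ j v hv y hy
            simp only at *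
            linarith
        have : (P i).prod (Q j) (S i ×ˢ T j) = 1 := by
          rw [Measure.prod_prod]
          simp only [P, Q, Measure.smul_apply, Measure.restrict_apply_self, smul_eq_mul]
          rw [ENNReal.inv_mul_cancel hSi (measure_ne_top _ _),
            ENNReal.inv_mul_cancel hTj (measure_ne_top _ _), one_mul]
        calc ENNReal.ofReal (c i j) = ENNReal.ofReal (c i j) * (P i).prod (Q j) (S i ×ˢ T j) := by
              rw [this, mul_one]
          _ ≤ _ := by gcongr

open Filter Topology in
lemma exists_optimal {X Y : Type*} [MeasurableSpace X] [TopologicalSpace X] [PolishSpace X]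
    [BorelSpace X] [MeasurableSpace Y] [TopologicalSpace Y] [PolishSpace Y]
    [BorelSpace Y] (μ : Measure X) (ν : Measure Y) [IsProbabilityMeasure μ]
    [IsProbabilityMeasure ν] (F : Set (X × Y)) (hF : IsClosed F) (s : ℝ) (hs : 0 ≤ s)
    (h : ∀ A : Set X, IsClosed A → μ.real A ≤ ν.real {y | ∃ x ∈ A, (x, y) ∈ F} + s) :
    ∃ π, IsCoupling π μ ν ∧ ENNReal.ofReal (1 - s) ≤ π F := by
  let _ := TopologicalSpace.upgradeIsCompletelyMetrizable X
  let _ := TopologicalSpace.upgradeIsCompletelyMetrizable Y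
  have hpos : ∀ n : ℕ, (0 : ℝ) < 1 / (n + 1) := fun n => by positivity
  choose π hπ hπF using fun n : ℕ =>
    exists_approx_s18 μ ν F s hs h (1 / (n + 1)) (1 / (n + 1)) (hpos n) (hpos n)
  have hprob : ∀ n, IsProbabilityMeasure (π n) := fun n => ⟨by
    have := measure_univ (μ := μ)
    rw [← (hπ n).1, Measure.map_apply measurable_fst .univ] at this
    simpa using this⟩
  let K : Set (ProbabilityMeasure (X × Y)) := {P | IsCoupling (P : Measure (X × Y)) μ ν}
  have hKt : IsTightMeasureSet {((P : ProbabilityMeasure (X × Y)) : Measure (X × Y)) | P ∈ K} := by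
    refine IsTightMeasureSet.prodMk ?_ ?_
    · refine (isTightMeasureSet_singleton (μ := μ)).subset ?_
      rintro _ ⟨_, ⟨P, hP, rfl⟩, rfl⟩
      exact hP.1
    · refine (isTightMeasureSet_singleton (μ := ν)).subset ?_
      rintro _ ⟨_, ⟨P, hP, rfl⟩, rfl⟩
      exact hP.2
  have hKc : IsClosed K := by
    let μ' : ProbabilityMeasure X := ⟨μ, inferInstance⟩
    let ν' : ProbabilityMeasure Y := ⟨ν, inferInstance⟩
    have : K = {P : ProbabilityMeasure (X × Y) | P.map continuous_fst.measurable.aemeasurable = μ'} ∩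
        {P : ProbabilityMeasure (X × Y) | P.map continuous_snd.measurable.aemeasurable = ν'} := by
      ext P
      constructor
      · rintro ⟨h1, h2⟩
        exact ⟨Subtype.ext h1, Subtype.ext h2⟩
      · rintro ⟨h1, h2⟩
        exact ⟨congrArg Subtype.val h1, congrArg Subtype.val h2⟩
    rw [this]
    exact (isClosed_eq (ProbabilityMeasure.continuous_map continuous_fst) continuous_const).inter
      (isClosed_eq (ProbabilityMeasure.continuous_map continuous_snd) continuous_const)
  have hK : IsCompact K := by
    have := isCompact_closure_of_isTightMeasureSet hKt
    rwa [hKc.closure_eq] at this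
  let L : Ultrafilter ℕ := hyperfilter ℕ
  have hL : (L : Filter ℕ) ≤ atTop := Nat.hyperfilter_le_atTop
  let Ps : ℕ → ProbabilityMeasure (X × Y) := fun n => ⟨π n, hprob n⟩
  obtain ⟨P, hPK, hP⟩ := hK.ultrafilter_le_nhds (L.map Ps) (by
    rw [le_principal_iff]
    show Ps ⁻¹' K ∈ (L : Filter ℕ)
    exact Filter.mem_of_superset Filter.univ_mem (fun n _ => hπ n))
  have hlim : Tendsto Ps L (𝓝 P) := hP
  refine ⟨P, hPK, ?_⟩
  have key : ∀ k : ℕ, ENNReal.ofReal (1 - s - 1 / (k + 1)) ≤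
      (P : Measure (X × Y)) (Metric.cthickening (1 / (k + 1)) F) := by
    intro k
    have h1 := ProbabilityMeasure.limsup_measure_closed_le_of_tendsto hlim
      (Metric.isClosed_cthickening (δ := 1 / ((k : ℝ) + 1)) (E := F))
    refine le_trans ?_ h1
    refine le_limsup_of_frequently_le (Eventually.frequently ?_)
    filter_upwards [hL (eventually_ge_atTop k)] with n hn
    have h2 : (1 : ℝ) / (n + 1) ≤ 1 / (k + 1) := by
      gcongr
    calc _ ≤ ENNReal.ofReal (1 - s - 1 / (n + 1)) := ENNReal.ofReal_le_ofReal (by linarith)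
      _ ≤ π n (Metric.cthickening (1 / (n + 1)) F) := hπF n
      _ ≤ π n (Metric.cthickening (1 / (k + 1)) F) :=
        measure_mono (Metric.cthickening_mono h2 F)
  have t0 : Tendsto (fun k : ℕ => (1 : ℝ) / (k + 1)) atTop (𝓝 0) :=
    tendsto_one_div_add_atTop_nhds_zero_nat
  have t1 : Tendsto (fun k : ℕ => (P : Measure (X × Y)) (Metric.cthickening (1 / (k + 1)) F)) atTop
      (𝓝 ((P : Measure (X × Y)) F)) :=
    (tendsto_measure_cthickening_of_isClosed ⟨1, one_pos, measure_ne_top _ _⟩ hF).comp t0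
  have t2 : Tendsto (fun k : ℕ => ENNReal.ofReal (1 - s - 1 / (k + 1))) atTop
      (𝓝 (ENNReal.ofReal (1 - s))) := by
    refine ENNReal.tendsto_ofReal ?_
    simpa using t0.const_sub (1 - s)
  exact le_of_tendsto_of_tendsto' t2 t1 key

/-- Optimal transport with binary cost (Strassen-type duality): for a non-empty open
`Γ ⊆ X × Y`, the minimal mass a coupling puts on `Γ` equals the supremum over closed sets
`A ⊆ X` of `μ(A) − ν(A^Γ)`, where `A^Γ = { y : ∃ x ∈ A, (x,y) ∉ Γ }`. -/
theorem binary_cost_duality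
    {X Y : Type*}
    [MeasurableSpace X] [TopologicalSpace X] [PolishSpace X] [BorelSpace X]
    [MeasurableSpace Y] [TopologicalSpace Y] [PolishSpace Y] [BorelSpace Y]
    (μ : Measure X) (ν : Measure Y) [IsProbabilityMeasure μ] [IsProbabilityMeasure ν]
    (Γ : Set (X × Y)) (hΓo : IsOpen Γ) (hΓne : Γ.Nonempty) :
    sInf {r : ℝ | ∃ π : Measure (X × Y), IsCoupling π μ ν ∧ r = (π Γ).toReal}
      = sSup {r : ℝ | ∃ A : Set X, IsClosed A ∧
          r = (μ A).toReal - (ν {y : Y | ∃ x ∈ A, (x, y) ∉ Γ}).toReal} := by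
  have hprob : ∀ π : Measure (X × Y), IsCoupling π μ ν → IsProbabilityMeasure π := fun π hπ => ⟨by
    have := measure_univ (μ := μ)
    rw [← hπ.1, Measure.map_apply measurable_fst .univ] at this
    simpa using this⟩
  apply le_antisymm
  · set S := {r : ℝ | ∃ A : Set X, IsClosed A ∧
          r = (μ A).toReal - (ν {y : Y | ∃ x ∈ A, (x, y) ∉ Γ}).toReal} with hS
    have hbdd : BddAbove S := by
      refine ⟨1, ?_⟩
      rintro _ ⟨A, -, rfl⟩
      have h1 : μ.real A ≤ 1 := measureReal_le_one
      have h2 : 0 ≤ ν.real {y : Y | ∃ x ∈ A, (x, y) ∉ Γ} := measureReal_nonneg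
      simp only [Measure.real] at h1 h2
      linarith
    have h0 : 0 ≤ sSup S := le_csSup hbdd ⟨∅, isClosed_empty, by simp⟩
    obtain ⟨π, hπ, hπF⟩ := exists_optimal μ ν Γᶜ hΓo.isClosed_compl (sSup S) h0 (by
      intro A hA
      have := le_csSup hbdd (show (μ A).toReal - (ν {y : Y | ∃ x ∈ A, (x, y) ∉ Γ}).toReal ∈ S from ⟨A, hA, rfl⟩)
      simp only [Measure.real, mem_compl_iff]
      linarith)
    have := hprob π hπ
    refine le_trans (csInf_le (a := (π Γ).toReal) ?_ ⟨π, hπ, rfl⟩) ?_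
    · refine ⟨0, ?_⟩
      rintro _ ⟨π, -, rfl⟩
      exact ENNReal.toReal_nonneg
    · rw [ENNReal.ofReal_le_iff_le_toReal (measure_ne_top _ _)] at hπF
      have h3 := probReal_compl_eq_one_sub (μ := π) hΓo.measurableSet
      simp only [Measure.real] at h3
      linarith
  · refine csSup_le ⟨_, ∅, isClosed_empty, rfl⟩ ?_
    rintro _ ⟨A, hA, rfl⟩
    refine le_csInf ⟨_, μ.prod ν, ⟨?_, ?_⟩, rfl⟩ ?_
    · rw [Measure.map_fst_prod]; simp
    · rw [Measure.map_snd_prod]; simp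
    rintro _ ⟨π, hπ, rfl⟩
    have := hprob π hπ
    set B := {y : Y | ∃ x ∈ A, (x, y) ∉ Γ}
    have h1 : μ A ≤ π Γ + ν B := by
      calc μ A = π (Prod.fst ⁻¹' A) := by
            rw [← hπ.1, Measure.map_apply measurable_fst hA.measurableSet]
        _ ≤ π (Γ ∪ Prod.snd ⁻¹' (toMeasurable ν B)) := by
            refine measure_mono ?_
            rintro ⟨x, y⟩ hx
            by_cases hxy : (x, y) ∈ Γ
            · exact Or.inl hxy
            · exact Or.inr (subset_toMeasurable ν B ⟨x, hx, hxy⟩)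
        _ ≤ π Γ + π (Prod.snd ⁻¹' (toMeasurable ν B)) := measure_union_le _ _
        _ = π Γ + ν B := by
            rw [← Measure.map_apply measurable_snd (measurableSet_toMeasurable ν B), hπ.2,
              measure_toMeasurable]
    have h2 := ENNReal.toReal_mono (by finiteness) h1
    rw [ENNReal.toReal_add (measure_ne_top _ _) (measure_ne_top _ _)] at h2
    linarith
end
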